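/- (A hyperbolic sextic) Let P₁,…,P₆ be six planes in general position in P³(ℂ), with equations p_i = 0, where general position means no four of the planes pass through a common point. Then there exists a sextic surface S = (s = 0), in general position with respect to the planes (i.e. avoiding the triple points of the configuration), such that for all sufficiently small ε ≠ 0 the sextic surface Σ_ε = (p₁p₂p₃p₄p₅p₆ = ε s) is Kobayashi-hyperbolic: it contains no nonconstant holomorphic map from ℂ. -/

import Mathlib

/- A hyperbolic sextic in `P³(ℂ)`.

`P³(ℂ)` is `Projectivization ℂ (Fin 4 → ℂ)`.  The planes `P i` are cut out by nonzero
homogeneous polynomials `p i` of degree 1, in general position (no quadruple point).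
A sextic is the zero set of a nonzero homogeneous polynomial of degree 6; it is in
general position with respect to the planes if it avoids the triple points of the
configuration.  The surface `Σ_ε` is cut out by `p 0 ⋯ p 5 - ε s`; membership of a
point of `P³(ℂ)` in it is tested on the representative `(f z).rep` (the defining
equation is homogeneous of degree 6, hence scale invariant).  Holomorphy of maps
`ℂ → P³(ℂ)` is via local nonvanishing holomorphic lifts; hyperbolicity of `Σ_ε` means
that every holomorphic map from `ℂ` with image in `Σ_ε` is constant. -/

open Metric Filter MvPolynomial
open scoped Topology

noncomputable section

/-- A map from `ℂ` to a projective space is holomorphic if it locally admits nonvanishing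
holomorphic lifts. -/
def HoloToProj {m : ℕ} (f : ℂ → Projectivization ℂ (Fin m → ℂ)) : Prop :=
  ∀ z₀ : ℂ, ∃ W : Set ℂ, IsOpen W ∧ z₀ ∈ W ∧ ∃ F : ℂ → (Fin m → ℂ),
    DifferentiableOn ℂ F W ∧ ∀ z ∈ W, ∃ h : F z ≠ 0, f z = Projectivization.mk ℂ (F z) h

lemma mont_tendsto {E : Type*} [NormedAddCommGroup E] [NormedSpace ℂ E]
    (U : Filter ℕ) [U.NeBot] (F : ℕ → ℂ → E) (G : ℂ → E) (Ω : Set ℂ) (hΩ : IsOpen Ω) (C : ℝ)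
    (hF : ∀ᶠ n in U, DifferentiableOn ℂ (F n) Ω ∧ ∀ z ∈ Ω, ‖F n z‖ ≤ C)
    (hG : ∀ z ∈ Ω, Tendsto (fun n => F n z) U (𝓝 (G z))) :
    TendstoLocallyUniformlyOn F G U Ω := by
  rw [Metric.tendstoLocallyUniformlyOn_iff]
  intro ε hε x hx
  obtain ⟨ρ, hρ, hρΩ⟩ := Metric.isOpen_iff.1 hΩ x hx
  set K : ℝ := 2 * |C| / ρ with hK
  have hK0 : 0 ≤ K := by positivity
  have hlip : ∀ᶠ n in U, ∀ z ∈ ball x ρ, dist (F n z) (F n x) ≤ K * dist z x := by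
    filter_upwards [hF] with n hn z hz
    refine Complex.dist_le_div_mul_dist_of_mapsTo_ball (hn.1.mono hρΩ) ?_ hz
    intro w hw
    rw [mem_closedBall, dist_eq_norm]
    have h1 := hn.2 w (hρΩ hw)
    have h2 := hn.2 x hx
    have h3 := norm_sub_le (F n w) (F n x)
    have := le_abs_self C
    linarith
  have hGlip : ∀ z ∈ ball x ρ, dist (G z) (G x) ≤ K * dist z x := by
    intro z hz
    refine le_of_tendsto ((hG z (hρΩ hz)).dist (hG x hx)) ?_
    filter_upwards [hlip] with n hn using hn z hz
  set δ := min ρ (ε / (4 * (K + 1))) with hδ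
  have hδ0 : 0 < δ := lt_min hρ (by positivity)
  refine ⟨ball x δ, mem_nhdsWithin_of_mem_nhds (ball_mem_nhds x hδ0), ?_⟩
  filter_upwards [hlip, (Metric.tendsto_nhds.1 (hG x hx)) (ε/4) (by positivity)] with n h1 h2 z hz
  have hzρ : z ∈ ball x ρ := ball_subset_ball (min_le_left _ _) hz
  have hzd : dist z x ≤ ε / (4 * (K + 1)) := (mem_ball.1 hz).le.trans (min_le_right _ _)
  have hKd : K * dist z x ≤ ε / 4 := by
    calc K * dist z x ≤ (K + 1) * (ε / (4 * (K + 1))) := by gcongr; linarith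
      _ = ε / 4 := by field_simp
  have a1 := h1 z hzρ
  have a2 := hGlip z hzρ
  have a3 := dist_triangle4 (G z) (G x) (F n x) (F n z)
  rw [dist_comm (G x) (F n x), dist_comm (F n x) (F n z)] at a3
  linarith

lemma ultra_lim {E : Type*} [NormedAddCommGroup E] [ProperSpace E]
    (U : Ultrafilter ℕ) (x : ℕ → E) (C : ℝ) (h : ∀ᶠ n in U, ‖x n‖ ≤ C) :
    ∃ y, Tendsto x U (𝓝 y) := by
  have := (isCompact_closedBall (0 : E) C).ultrafilter_le_nhds (U.map x) ?_
  · obtain ⟨y, -, hy⟩ := this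
    exact ⟨y, hy⟩
  · rw [le_principal_iff]
    change ∀ᶠ n in U, x n ∈ closedBall (0:E) C
    filter_upwards [h] with n hn
    simpa using hn

/-- Hurwitz -/
lemma hurwitz_aux (U : Filter ℕ) [U.NeBot] (A : ℕ → ℂ → ℂ) (B : ℂ → ℂ) (z₀ : ℂ) (r : ℝ) (hr : 0 < r)
    (hA : ∀ᶠ n in U, DifferentiableOn ℂ (A n) (ball z₀ r) ∧ ∀ z ∈ ball z₀ r, A n z ≠ 0)
    (hB : ∀ᶠ z in 𝓝[≠] z₀, B z ≠ 0)
    (hBc : DifferentiableOn ℂ B (ball z₀ r))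
    (hAB : TendstoLocallyUniformlyOn A B U (ball z₀ r)) : B z₀ ≠ 0 := by
  obtain ⟨ρ, hρ, hρB⟩ := Metric.mem_nhdsWithin_iff.1 hB
  set t := min ρ r / 2 with ht
  have hm : 0 < min ρ r := lt_min hρ hr
  have ht0 : 0 < t := by positivity
  have htρ : t < ρ := by have := min_le_left ρ r; linarith
  have htr : t < r := by have := min_le_right ρ r; linarith
  have hsub : closedBall z₀ t ⊆ ball z₀ r := closedBall_subset_ball htr
  have hss : sphere z₀ t ⊆ ball z₀ r := sphere_subset_closedBall.trans hsub
  have hne : (sphere z₀ t).Nonempty := NormedSpace.sphere_nonempty.2 ht0.le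
  obtain ⟨w, hw, hwmin⟩ := (isCompact_sphere z₀ t).exists_isMinOn hne
    ((hBc.continuousOn.mono hss).norm)
  have hBw : 0 < ‖B w‖ := by
    rw [norm_pos_iff]
    apply hρB
    have : dist w z₀ = t := hw
    refine ⟨by rw [mem_ball]; linarith, ?_⟩
    intro h
    rw [Set.mem_singleton_iff] at h
    rw [h, dist_self] at this
    linarith
  set δ := ‖B w‖ with hδ
  have hun : TendstoUniformlyOn A B U (sphere z₀ t) :=
    (tendstoLocallyUniformlyOn_iff_tendstoUniformlyOn_of_compact (isCompact_sphere z₀ t)).1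
      (hAB.mono hss)
  have hlow : ∀ᶠ n in U, δ / 2 ≤ ‖A n z₀‖ := by
    filter_upwards [hA, Metric.tendstoUniformlyOn_iff.1 hun (δ/2) (by positivity)] with n h1 h2
    have hd : DiffContOnCl ℂ (fun z => (A n z)⁻¹) (ball z₀ t) := by
      apply DifferentiableOn.diffContOnCl
      rw [closure_ball _ ht0.ne']
      exact (h1.1.mono hsub).inv (fun z hz => h1.2 z (hsub hz))
    have := Complex.norm_le_of_forall_mem_frontier_norm_le (C := (δ/2)⁻¹) isBounded_ball hd ?_
      (subset_closure (mem_ball_self ht0))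
    · rw [norm_inv] at this
      exact (inv_le_inv₀ (norm_pos_iff.2 (h1.2 z₀ (mem_ball_self hr))) (by positivity)).1 this
    · rw [frontier_ball _ ht0.ne']
      intro z hz
      rw [norm_inv]
      apply inv_anti₀ (by positivity)
      have a1 := h2 z hz
      have a2 : δ ≤ ‖B z‖ := hwmin hz
      rw [dist_eq_norm] at a1
      have a3 := norm_sub_norm_le (B z) (A n z)
      linarith
  have hlim := (hAB.tendsto_at (mem_ball_self hr)).norm
  have := ge_of_tendsto hlim hlow
  intro h
  rw [h, norm_zero] at this
  linarith

lemma norm_eq_global (A B : ℂ → ℂ) (hA : Differentiable ℂ A) (hB : Differentiable ℂ B) (z₀ : ℂ)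
    (h : ∀ᶠ z in 𝓝 z₀, ‖A z‖ = ‖B z‖) : ∀ z, ‖A z‖ = ‖B z‖ := by
  have hAa : AnalyticOnNhd ℂ A Set.univ := fun z _ => hA.analyticAt z
  have hBa : AnalyticOnNhd ℂ B Set.univ := fun z _ => hB.analyticAt z
  by_cases hB0 : ∀ᶠ z in 𝓝 z₀, B z = 0
  · have hA0 : ∀ᶠ z in 𝓝 z₀, A z = 0 := by
      filter_upwards [h, hB0] with z h1 h2
      rw [h2, norm_zero, norm_eq_zero] at h1; exact h1
    have e1 := hAa.eq_of_eventuallyEq (g := fun _ => 0) (fun z _ => analyticAt_const) hA0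
    have e2 := hBa.eq_of_eventuallyEq (g := fun _ => 0) (fun z _ => analyticAt_const) hB0
    intro z; rw [e1, e2]
  · have : ∃ᶠ z in 𝓝 z₀, B z ≠ 0 := Filter.not_eventually.1 hB0
    obtain ⟨z₁, hz1, hz2⟩ := (this.and_eventually h.eventually_nhds).exists
    have hloc : ∀ᶠ z in 𝓝 z₁, B z ≠ 0 := hB.continuous.continuousAt.eventually_ne hz1
    have hmax : IsLocalMax (norm ∘ fun z => A z / B z) z₁ := by
      filter_upwards [hz2, hloc] with z h1 h2
      have h3 := hz2.self_of_nhds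
      simp only [Function.comp, norm_div, h1, h3]
      rw [div_self (norm_ne_zero_iff.2 h2), div_self (norm_ne_zero_iff.2 hz1)]
    have hev := Complex.eventually_eq_of_isLocalMax_norm (f := fun z => A z / B z) (c := z₁) (by
      filter_upwards [hloc] with z hz
      exact (hA z).div (hB z) hz) hmax
    set c := A z₁ / B z₁ with hc
    have hc1 : ‖c‖ = 1 := by
      rw [hc, norm_div, hz2.self_of_nhds, div_self (norm_ne_zero_iff.2 hz1)]
    have e := hAa.eq_of_eventuallyEq (g := fun z => c * B z) (z₀ := z₁)
      (fun z _ => analyticAt_const.mul (hB.analyticAt z)) (by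
        filter_upwards [hev, hloc] with z h1 h2
        rw [← h1]; field_simp)
    intro z
    rw [e, norm_mul, hc1, one_mul]

lemma exists_entire_log (f : ℂ → ℂ) (hf : Differentiable ℂ f) (h0 : ∀ z, f z ≠ 0) :
    ∃ u : ℂ → ℂ, Differentiable ℂ u ∧ ∀ z, f z = Complex.exp (u z) := by
  have hd : Differentiable ℂ (fun z => deriv f z / f z) := by
    intro z
    exact (hf.analyticAt z).deriv.differentiableAt.div (hf z) (h0 z)
  obtain ⟨g, hg⟩ := hd.isExactOn_univ
  have hgd : ∀ z, HasDerivAt g (deriv f z / f z) z := fun z => hg z (Set.mem_univ z)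
  have hq : ∀ z, HasDerivAt (fun z => f z * Complex.exp (- g z)) 0 z := by
    intro z
    have h1 : HasDerivAt (fun z => Complex.exp (- g z))
        (Complex.exp (- g z) * -(deriv f z / f z)) z := ((hgd z).neg).cexp
    refine ((hf z).hasDerivAt.mul h1).congr_deriv ?_
    have := h0 z
    field_simp
    ring
  have hconst : ∀ z, f z * Complex.exp (- g z) = f 0 * Complex.exp (- g 0) := fun z =>
    is_const_of_deriv_eq_zero (fun z => (hq z).differentiableAt) (fun z => (hq z).deriv) z 0
  refine ⟨fun z => g z + Complex.log (f 0 * Complex.exp (- g 0)), ?_, ?_⟩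
  · intro z; exact (hgd z).differentiableAt.add_const _
  · intro z
    rw [Complex.exp_add, Complex.exp_log (mul_ne_zero (h0 0) (Complex.exp_ne_zero _)), ← hconst z,
      mul_left_comm, ← Complex.exp_add]
    simp

/-- normalisation by the `i`-th coordinate -/
def nrm {m : ℕ} (f : ℂ → Fin m → ℂ) (i : Fin m) : ℂ → Fin m → ℂ := fun w => (f w i)⁻¹ • f w

def IsCurve {m : ℕ} (f : ℂ → Fin m → ℂ) : Prop :=
  ∀ z, f z ≠ 0 ∧ ∀ i, f z i ≠ 0 → AnalyticAt ℂ (nrm f i) z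

def IsConst {m : ℕ} (f : ℂ → Fin m → ℂ) : Prop :=
  ∀ z w i j, f z i * f w j = f z j * f w i

def Conv {m : ℕ} (U : Filter ℕ) (f : ℕ → ℂ → Fin m → ℂ) (g : ℂ → Fin m → ℂ) : Prop :=
  ∀ z₀, ∃ i, ∃ r > 0, (∀ᶠ n in U, ∀ z ∈ ball z₀ r, f n z i ≠ 0) ∧
    (∀ z ∈ ball z₀ r, g z i ≠ 0) ∧
    TendstoLocallyUniformlyOn (fun n => nrm (f n) i) (nrm g i) U (ball z₀ r)

lemma nrm_apply {m : ℕ} (f : ℂ → Fin m → ℂ) (i j : Fin m) (w : ℂ) :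
    nrm f i w j = (f w i)⁻¹ * f w j := rfl

lemma nrm_self {m : ℕ} (f : ℂ → Fin m → ℂ) (i : Fin m) (w : ℂ) (h : f w i ≠ 0) :
    nrm f i w i = 1 := by rw [nrm_apply, inv_mul_cancel₀ h]

lemma nrm_change {m : ℕ} (f : ℂ → Fin m → ℂ) (i k : Fin m) (w : ℂ) (h : f w i ≠ 0) :
    nrm f k w = (nrm f i w k)⁻¹ • nrm f i w := by
  ext j
  simp only [nrm_apply, Pi.smul_apply, smul_eq_mul, mul_inv, inv_inv]
  field_simp

lemma analyticAt_coord {m : ℕ} {F : ℂ → Fin m → ℂ} {z : ℂ} (h : AnalyticAt ℂ F z) (k : Fin m) :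
    AnalyticAt ℂ (fun w => F w k) z := by
  exact (ContinuousLinearMap.proj (R := ℂ) (φ := fun _ : Fin m => ℂ) k).analyticAt _ |>.comp h

lemma exists_coord {m : ℕ} {v : Fin m → ℂ} (h : v ≠ 0) : ∃ i, v i ≠ 0 := by
  by_contra! hc
  exact h (funext hc)

lemma nrm_analytic_of_one {m : ℕ} (f : ℂ → Fin m → ℂ) (i k : Fin m) (z : ℂ)
    (hi : ∀ᶠ w in 𝓝 z, f w i ≠ 0) (ha : AnalyticAt ℂ (nrm f i) z) (hk : f z k ≠ 0) :
    AnalyticAt ℂ (nrm f k) z := by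
  have h1 : AnalyticAt ℂ (fun w => (nrm f i w k)⁻¹ • nrm f i w) z := by
    refine AnalyticAt.smul (AnalyticAt.inv (analyticAt_coord ha k) ?_) ha
    rw [nrm_apply]
    exact mul_ne_zero (inv_ne_zero hi.self_of_nhds) hk
  refine h1.congr ?_
  filter_upwards [hi] with w hw
  exact (nrm_change f i k w hw).symm

lemma IsCurve.eventually_ne {m : ℕ} {f : ℂ → Fin m → ℂ} (hf : IsCurve f) {z : ℂ} {i : Fin m}
    (h : f z i ≠ 0) : ∀ᶠ w in 𝓝 z, f w i ≠ 0 := by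
  have h1 := analyticAt_coord ((hf z).2 i h) i
  have h2 : nrm f i z i ≠ 0 := by rw [nrm_self f i z h]; exact one_ne_zero
  filter_upwards [h1.continuousAt.eventually_ne h2] with w hw h0
  apply hw
  rw [nrm_apply, h0, mul_zero]

lemma IsCurve.differentiableOn {m : ℕ} {f : ℂ → Fin m → ℂ} (hf : IsCurve f) {s : Set ℂ} {i : Fin m}
    (h : ∀ z ∈ s, f z i ≠ 0) : DifferentiableOn ℂ (nrm f i) s := fun z hz =>
  ((hf z).2 i (h z hz)).differentiableAt.differentiableWithinAt

lemma IsCurve.comp_affine {m : ℕ} {f : ℂ → Fin m → ℂ} (hf : IsCurve f) (a b : ℂ) :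
    IsCurve (fun z => f (a + b * z)) := by
  intro z
  refine ⟨(hf _).1, fun i hi => ?_⟩
  have h1 : AnalyticAt ℂ (nrm f i) (a + b * z) := (hf _).2 i hi
  exact h1.comp (f := fun z => a + b * z) (by fun_prop)

lemma ultra_pigeon {α : Type*} [Finite α] (U : Ultrafilter ℕ) (P : ℕ → α → Prop)
    (h : ∀ᶠ n in U, ∃ i, P n i) : ∃ i, ∀ᶠ n in U, P n i := by
  by_contra! hc
  have h2 := eventually_all.2 hc
  obtain ⟨n, ⟨i, hi⟩, hn⟩ := (h.and h2).exists
  exact hn i hi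

/-- `f` stays in a chart on the ball. -/
def Good {m : ℕ} (f : ℂ → Fin m → ℂ) (z : ℂ) (r : ℝ) : Prop :=
  ∃ i, ∀ w ∈ ball z r, ∀ j, ‖f w j‖ ≤ 2 * ‖f w i‖

lemma ne_of_dom {m : ℕ} {v : Fin m → ℂ} (hv : v ≠ 0) {i : Fin m} {C : ℝ}
    (h : ∀ j, ‖v j‖ ≤ C * ‖v i‖) : v i ≠ 0 := by
  intro h0
  apply hv
  ext j
  have := h j
  rw [h0, norm_zero, mul_zero] at this
  simpa using this

lemma nrm_bound {m : ℕ} {f : ℂ → Fin m → ℂ} {w : ℂ} (hv : f w ≠ 0) {i : Fin m}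
    (h : ∀ j, ‖f w j‖ ≤ 2 * ‖f w i‖) : ‖nrm f i w‖ ≤ 2 := by
  rw [pi_norm_le_iff_of_nonneg (by norm_num)]
  intro j
  have h0 := norm_pos_iff.2 (ne_of_dom hv h)
  rw [nrm_apply, norm_mul, norm_inv, inv_mul_le_iff₀ h0, mul_comm]
  exact h j

lemma Good.mono {m : ℕ} {f : ℂ → Fin m → ℂ} {z z' : ℂ} {r r' : ℝ} (h : Good f z r)
    (hs : ball z' r' ⊆ ball z r) : Good f z' r' := by
  obtain ⟨i, hi⟩ := h
  exact ⟨i, fun w hw => hi w (hs hw)⟩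

lemma const_of_bounded {m : ℕ} {f : ℂ → Fin m → ℂ} (hf : IsCurve f) (i : Fin m)
    (h : ∀ w, ∀ j, ‖f w j‖ ≤ 2 * ‖f w i‖) : IsConst f := by
  have hi : ∀ w, f w i ≠ 0 := fun w => ne_of_dom (hf w).1 (h w)
  have hd : Differentiable ℂ (nrm f i) := fun z => ((hf z).2 i (hi z)).differentiableAt
  have hb : Bornology.IsBounded (Set.range (nrm f i)) := by
    rw [isBounded_iff_forall_norm_le]
    refine ⟨2, ?_⟩
    rintro _ ⟨w, rfl⟩
    exact nrm_bound (hf w).1 (h w)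
  have hc := hd.apply_eq_apply_of_bounded hb
  intro z w a b
  have e1 := congrFun (hc z w) a
  have e2 := congrFun (hc z w) b
  simp only [nrm_apply] at e1 e2
  have hz := hi z
  have hw := hi w
  field_simp at e1 e2
  have h3 : f z a * f w b * (f z i * f w i) = f z b * f w a * (f z i * f w i) := by
    linear_combination f w b * f z i * e1 - f w a * f z i * e2
  exact mul_right_cancel₀ (mul_ne_zero hz hw) h3

lemma const_of_good {m : ℕ} {f : ℂ → Fin m → ℂ} (hf : IsCurve f) (z : ℂ)
    (h : ∀ n : ℕ, Good f z n) : IsConst f := by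
  obtain ⟨i, hi⟩ := ultra_pigeon (hyperfilter ℕ)
    (fun n i => ∀ w ∈ ball z (n:ℝ), ∀ j, ‖f w j‖ ≤ 2 * ‖f w i‖) (Eventually.of_forall h)
  refine const_of_bounded hf i (fun w => ?_)
  have h1 : ∀ᶠ n : ℕ in hyperfilter ℕ, dist w z < n := by
    have : ∀ᶠ n : ℕ in atTop, dist w z < n := tendsto_natCast_atTop_atTop.eventually_gt_atTop _
    exact this.filter_mono Nat.hyperfilter_le_atTop
  obtain ⟨n, h2, h3⟩ := (hi.and h1).exists
  exact h2 w h3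

def Rad {m : ℕ} (f : ℂ → Fin m → ℂ) (z : ℂ) : ℝ := sSup {r | Good f z r}


lemma exists_good_pos {m : ℕ} {f : ℂ → Fin m → ℂ} (hf : IsCurve f) (z : ℂ) : ∃ r > 0, Good f z r := by
  obtain ⟨i₀, hi₀⟩ := exists_coord (hf z).1
  have : Nonempty (Fin m) := ⟨i₀⟩
  obtain ⟨i, hi⟩ := Finite.exists_max (fun i => ‖f z i‖)
  have hne : f z i ≠ 0 := by
    intro h
    have := hi i₀
    rw [h, norm_zero] at this
    exact hi₀ (by simpa using this)
  have hc := ((hf z).2 i hne).continuousAt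
  have h2 : ∀ᶠ w in 𝓝 z, ∀ j, ‖nrm f i w j‖ < 2 := by
    rw [eventually_all]
    intro j
    have hcj := (analyticAt_coord ((hf z).2 i hne) j).continuousAt.norm
    refine hcj.eventually_lt_const ?_
    change ‖nrm f i z j‖ < 2
    rw [nrm_apply, norm_mul, norm_inv, inv_mul_lt_iff₀ (norm_pos_iff.2 hne)]
    have := hi j
    have := norm_pos_iff.2 hne
    linarith
  obtain ⟨r, hr, hr2⟩ := Metric.eventually_nhds_iff_ball.1 (h2.and (hf.eventually_ne hne))
  refine ⟨r, hr, i, fun w hw j => ?_⟩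
  obtain ⟨a, b⟩ := hr2 w hw
  have := a j
  rw [nrm_apply, norm_mul, norm_inv, inv_mul_lt_iff₀ (norm_pos_iff.2 b)] at this
  linarith

lemma good_bdd {m : ℕ} {f : ℂ → Fin m → ℂ} (hf : IsCurve f) (hnc : ¬ IsConst f)
    (z : ℂ) : BddAbove {r | Good f z r} := by
  by_contra hb
  apply hnc
  refine const_of_good hf z (fun n => ?_)
  rw [not_bddAbove_iff] at hb
  obtain ⟨r, hr, hn⟩ := hb n
  exact Good.mono hr (ball_subset_ball hn.le)

lemma rad_pos {m : ℕ} {f : ℂ → Fin m → ℂ} (hf : IsCurve f) (hnc : ¬ IsConst f)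
    (z : ℂ) : 0 < Rad f z := by
  obtain ⟨r, hr, hg⟩ := exists_good_pos hf z
  exact hr.trans_le (le_csSup (good_bdd hf hnc z) hg)

lemma good_of_lt {m : ℕ} {f : ℂ → Fin m → ℂ} (hf : IsCurve f)
    (z : ℂ) (r : ℝ) (h : r < Rad f z) : Good f z r := by
  obtain ⟨r₀, -, hg⟩ := exists_good_pos hf z
  obtain ⟨r', hr', hlt⟩ := exists_lt_of_lt_csSup ⟨r₀, hg⟩ h
  exact Good.mono hr' (ball_subset_ball hlt.le)

lemma rad_le {m : ℕ} {f : ℂ → Fin m → ℂ} (hf : IsCurve f) (hnc : ¬ IsConst f)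
    (z z' : ℂ) : Rad f z ≤ Rad f z' + dist z z' := by
  refine le_of_forall_lt fun r hr => ?_
  obtain ⟨r', h1, h2⟩ := exists_between hr
  have hg := good_of_lt hf z r' h2
  have : r' - dist z z' ≤ Rad f z' := by
    refine le_csSup (good_bdd hf hnc z') (Good.mono hg ?_)
    apply ball_subset_ball'
    rw [dist_comm z' z]; linarith
  linarith

lemma rad_cont {m : ℕ} {f : ℂ → Fin m → ℂ} (hf : IsCurve f) (hnc : ¬ IsConst f) : Continuous (Rad f) := by
  have : LipschitzWith 1 (Rad f) := by
    apply LipschitzWith.of_le_add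
    intro x y
    exact rad_le hf hnc x y
  exact this.continuous


lemma zalcman (R : ℂ → ℝ) (hR : Continuous R) (hpos : ∀ z, 0 < R z) (n : ℕ) :
    ∃ w, ∀ z, dist z w ≤ n * R w → R w / 2 ≤ R z := by
  set L : ℝ := (2 * n + 1) * R 0 with hL
  have hL0 : 0 < L := by have := hpos 0; positivity
  obtain ⟨w, hw, hmax⟩ := (isCompact_closedBall (0:ℂ) L).exists_isMaxOn
    ⟨0, mem_closedBall_self hL0.le⟩
    (f := fun z => (L - ‖z‖) / R z)
    ((continuous_const.sub continuous_norm).div hR (fun z => (hpos z).ne')).continuousOn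
  set M := (L - ‖w‖) / R w with hM
  have hM1 : 2 * n + 1 ≤ M := by
    have h0 := hmax (mem_closedBall_self hL0.le)
    simp only [Set.mem_ofPred_eq, norm_zero, sub_zero] at h0
    have : L / R 0 = 2 * n + 1 := by rw [hL]; field_simp [(hpos 0).ne']
    rw [this] at h0
    exact h0
  refine ⟨w, fun z hz => ?_⟩
  have hRw := hpos w
  have hRz := hpos z
  have e : L - ‖w‖ = M * R w := by rw [hM]; field_simp
  have hzn : ‖z‖ ≤ ‖w‖ + n * R w := by
    have := norm_le_norm_add_norm_sub' z w
    rw [← dist_eq_norm] at this; linarith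
  have h1 : (M - n) * R w ≤ L - ‖z‖ := by nlinarith
  have hn0 : (0:ℝ) ≤ n := Nat.cast_nonneg n
  have hpos1 : 0 ≤ (M - n) * R w := mul_nonneg (by linarith) hRw.le
  have hzb : z ∈ closedBall (0:ℂ) L := by
    rw [mem_closedBall_zero_iff]; linarith
  have h2 : (L - ‖z‖) / R z ≤ M := hmax hzb
  rw [div_le_iff₀ hRz] at h2
  have h3 : (M - n) * R w ≤ M * R z := h1.trans h2
  have h4 : M / 2 * R w ≤ (M - n) * R w := by
    apply mul_le_mul_of_nonneg_right _ hRw.le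
    linarith
  have hM0 : 0 < M := by linarith
  have h5 : M * (R w / 2) ≤ M * R z := by linarith
  exact le_of_mul_le_mul_left h5 hM0

lemma good_comp {m : ℕ} {f : ℂ → Fin m → ℂ} (a : ℂ) (r : ℝ) (hr : 0 < r) (z : ℂ) (ρ : ℝ) :
    Good (fun z => f (a + r * z)) z ρ ↔ Good f (a + r * z) (r * ρ) := by
  have hrc : (r:ℂ) ≠ 0 := by exact_mod_cast hr.ne'
  constructor
  · rintro ⟨i, hi⟩
    refine ⟨i, fun w hw j => ?_⟩
    have h := hi ((w - a) / r) ?_ j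
    · have e : a + (r:ℂ) * ((w - a) / r) = w := by field_simp; ring
      simpa only [e] using h
    · rw [mem_ball, dist_eq_norm] at hw ⊢
      have e : (w - a) / r - z = (w - (a + r * z)) / r := by field_simp; ring
      rw [e, norm_div, Complex.norm_real, Real.norm_of_nonneg hr.le, div_lt_iff₀ hr]
      linarith
  · rintro ⟨i, hi⟩
    refine ⟨i, fun w hw j => hi (a + r * w) ?_ j⟩
    rw [mem_ball, dist_eq_norm] at hw ⊢
    have e : a + r * w - (a + r * z) = r * (w - z) := by ring
    rw [e, norm_mul, Complex.norm_real, Real.norm_of_nonneg hr.le]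
    gcongr

lemma conv_of_good {m : ℕ} (U : Ultrafilter ℕ) (f : ℕ → ℂ → Fin m → ℂ) (hf : ∀ n, IsCurve (f n))
    (hg : ∀ z, ∀ᶠ n in U, Good (f n) z (1/4)) :
    ∃ g, IsCurve g ∧ Conv U f g := by
  have key : ∀ z, ∃ i, ∃ v, (∀ᶠ n in U, ∀ w ∈ ball z (1/4), ∀ j, ‖f n w j‖ ≤ 2 * ‖f n w i‖) ∧
      Tendsto (fun n => nrm (f n) i z) U (𝓝 v) := by
    intro z
    obtain ⟨i, hi⟩ := ultra_pigeon U
      (fun n i => ∀ w ∈ ball z (1/4), ∀ j, ‖f n w j‖ ≤ 2 * ‖f n w i‖) (hg z)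
    obtain ⟨v, hv⟩ := ultra_lim U (fun n => nrm (f n) i z) 2 (by
      filter_upwards [hi] with n hn
      exact nrm_bound (hf n z).1 (hn z (mem_ball_self (by norm_num))))
    exact ⟨i, v, hi, hv⟩
  choose ix g hdom hlim using key
  have hnz : ∀ z₀, ∀ᶠ n in U, ∀ w ∈ ball z₀ (1/4), f n w (ix z₀) ≠ 0 := by
    intro z₀
    filter_upwards [hdom z₀] with n hn w hw
    exact ne_of_dom (hf n w).1 (hn w hw)
  have claim : ∀ z₀, ∀ z ∈ ball z₀ (1/4 : ℝ), g z (ix z₀) ≠ 0 ∧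
      Tendsto (fun n => nrm (f n) (ix z₀) z) U (𝓝 (nrm g (ix z₀) z)) := by
    intro z₀ z hz
    obtain ⟨v, hv⟩ := ultra_lim U (fun n => nrm (f n) (ix z₀) z) 2 (by
      filter_upwards [hdom z₀] with n hn
      exact nrm_bound (hf n z).1 (hn z hz))
    have hA : Tendsto (fun n => nrm (f n) (ix z) z (ix z₀)) U (𝓝 (g z (ix z₀))) :=
      (tendsto_pi_nhds.1 (hlim z)) (ix z₀)
    have hB : Tendsto (fun n => nrm (f n) (ix z₀) z (ix z)) U (𝓝 (v (ix z))) :=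
      (tendsto_pi_nhds.1 hv) (ix z)
    have hone : ∀ᶠ n in U, nrm (f n) (ix z) z (ix z₀) * nrm (f n) (ix z₀) z (ix z) = 1 := by
      filter_upwards [hnz z, hnz z₀] with n h1 h2
      have a := h1 z (mem_ball_self (by norm_num))
      have b := h2 z hz
      simp only [nrm_apply]
      field_simp
    have h1 : g z (ix z₀) * v (ix z) = 1 :=
      tendsto_nhds_unique (hA.mul hB) (tendsto_const_nhds.congr' (by
        filter_upwards [hone] with n hn using hn.symm))
    have hne : g z (ix z₀) ≠ 0 := left_ne_zero_of_mul_eq_one h1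
    refine ⟨hne, ?_⟩
    refine ((hA.inv₀ hne).smul (hlim z)).congr' ?_
    filter_upwards [hnz z] with n h1
    exact (nrm_change (f n) (ix z) (ix z₀) z (h1 z (mem_ball_self (by norm_num)))).symm
  have hconv : ∀ z₀, TendstoLocallyUniformlyOn (fun n => nrm (f n) (ix z₀)) (nrm g (ix z₀)) U
      (ball z₀ (1/4)) := by
    intro z₀
    refine mont_tendsto U _ _ _ isOpen_ball 2 ?_ (fun z hz => (claim z₀ z hz).2)
    filter_upwards [hnz z₀, hdom z₀] with n h1 h2
    exact ⟨(hf n).differentiableOn h1, fun z hz => nrm_bound (hf n z).1 (h2 z hz)⟩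
  refine ⟨g, ?_, ?_⟩
  · intro z
    have hself := (claim z z (mem_ball_self (by norm_num))).1
    refine ⟨fun h => hself (by rw [h]; rfl), fun k hk => ?_⟩
    refine nrm_analytic_of_one g (ix z) k z ?_ ?_ hk
    · filter_upwards [ball_mem_nhds z (show (0:ℝ) < 1/4 by norm_num)] with w hw
      exact (claim z w hw).1
    · have hd : DifferentiableOn ℂ (nrm g (ix z)) (ball z (1/4)) := by
        refine (hconv z).differentiableOn ?_ isOpen_ball
        filter_upwards [hnz z] with n h1 using (hf n).differentiableOn h1
      exact hd.analyticAt (ball_mem_nhds z (by norm_num))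
  · intro z₀
    exact ⟨ix z₀, 1/4, by norm_num, hnz z₀, fun z hz => (claim z₀ z hz).1, hconv z₀⟩

lemma good_of_conv_const {m : ℕ} (U : Filter ℕ) (f : ℕ → ℂ → Fin m → ℂ) (g : ℂ → Fin m → ℂ)
    (hg : IsCurve g) (hc : Conv U f g) (hconst : IsConst g) : ∀ᶠ n in U, Good (f n) 0 2 := by
  obtain ⟨i₀, hi₀⟩ := exists_coord (hg 0).1
  have : Nonempty (Fin m) := ⟨i₀⟩
  obtain ⟨i, hi⟩ := Finite.exists_max (fun i => ‖g 0 i‖)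
  have hne : 0 < ‖g 0 i‖ := (norm_pos_iff.2 hi₀).trans_le (hi i₀)
  have hdom : ∀ z j, ‖g z j‖ ≤ ‖g z i‖ := by
    intro z j
    have h1 := congrArg norm (hconst z 0 j i)
    rw [norm_mul, norm_mul] at h1
    have h2 : ‖g z j‖ * ‖g 0 i‖ ≤ ‖g z i‖ * ‖g 0 i‖ := by
      rw [h1]; gcongr; exact hi j
    exact le_of_mul_le_mul_right h2 hne
  have main : ∀ᶠ n in U, ∀ w ∈ closedBall (0:ℂ) 2, ∀ j, ‖f n w j‖ ≤ 2 * ‖f n w i‖ := by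
    refine IsCompact.induction_on
      (p := fun s => ∀ᶠ n in U, ∀ w ∈ s, ∀ j, ‖f n w j‖ ≤ 2 * ‖f n w i‖)
      (isCompact_closedBall (0:ℂ) 2) ?_ ?_ ?_ ?_
    · simp
    · intro s t hst ht
      filter_upwards [ht] with n hn w hw using hn w (hst hw)
    · intro s t hs ht
      filter_upwards [hs, ht] with n h1 h2 w hw
      exact hw.elim (h1 w) (h2 w)
    · intro z _
      obtain ⟨k, r, hr, hk1, hk2, hk3⟩ := hc z
      obtain ⟨t, ht, hev⟩ := (Metric.tendstoLocallyUniformlyOn_iff.1 hk3) (1/4) (by norm_num) z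
        (mem_ball_self hr)
      rw [isOpen_ball.nhdsWithin_eq (mem_ball_self hr)] at ht
      refine ⟨t ∩ ball z r, mem_nhdsWithin_of_mem_nhds (inter_mem ht (ball_mem_nhds z hr)), ?_⟩
      filter_upwards [hk1, hev] with n h1 h2 w hw j
      have hfk := h1 w hw.2
      have hgk := hk2 w hw.2
      have hd := h2 w hw.1
      rw [dist_eq_norm] at hd
      have hco : ∀ l, ‖nrm g k w l - nrm (f n) k w l‖ < 1/4 := fun l =>
        (norm_le_pi_norm (nrm g k w - nrm (f n) k w) l).trans_lt hd
      have hgd : ∀ l, ‖nrm g k w l‖ ≤ ‖nrm g k w i‖ := by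
        intro l
        simp only [nrm_apply, norm_mul]
        gcongr
        exact hdom w l
      have hg1 : 1 ≤ ‖nrm g k w i‖ := by
        have := hgd k
        rwa [nrm_self g k w hgk, norm_one] at this
      have a1 := hco j
      have a2 := hco i
      have a3 := norm_sub_norm_le (nrm (f n) k w j) (nrm g k w j)
      rw [norm_sub_rev] at a3
      have a4 := norm_sub_norm_le (nrm g k w i) (nrm (f n) k w i)
      have a5 := hgd j
      have a6 : ‖nrm (f n) k w j‖ ≤ 2 * ‖nrm (f n) k w i‖ := by linarith
      simp only [nrm_apply, norm_mul, norm_inv] at a6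
      have hp := norm_pos_iff.2 hfk
      have a7 : ‖f n w k‖⁻¹ * ‖f n w j‖ ≤ ‖f n w k‖⁻¹ * (2 * ‖f n w i‖) := by linarith
      exact le_of_mul_le_mul_left a7 (inv_pos.2 hp)
  filter_upwards [main] with n hn
  exact ⟨i, fun w hw => hn w (ball_subset_closedBall hw)⟩

/-- Brody's lemma for sequences of entire curves. -/
lemma brody {m : ℕ} (f : ℕ → ℂ → Fin m → ℂ) (hf : ∀ n, IsCurve (f n)) (hnc : ∀ n, ¬ IsConst (f n)) :
    ∃ a b : ℕ → ℂ, ∃ g, IsCurve g ∧ ¬ IsConst g ∧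
      Conv (hyperfilter ℕ) (fun n z => f n (a n + b n * z)) g := by
  have hz : ∀ n, ∃ w, ∀ z, dist z w ≤ n * Rad (f n) w → Rad (f n) w / 2 ≤ Rad (f n) z := fun n =>
    zalcman (Rad (f n)) (rad_cont (hf n) (hnc n)) (rad_pos (hf n) (hnc n)) n
  choose w hw using hz
  set r : ℕ → ℝ := fun n => Rad (f n) (w n) with hr
  have hr0 : ∀ n, 0 < r n := fun n => rad_pos (hf n) (hnc n) _
  have hcur : ∀ n, IsCurve (fun z => f n (w n + (r n : ℂ) * z)) := fun n =>
    (hf n).comp_affine _ _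
  obtain ⟨g, hg, hc⟩ := conv_of_good (hyperfilter ℕ) (fun n z => f n (w n + (r n : ℂ) * z)) hcur (by
    intro z
    have h1 : ∀ᶠ n : ℕ in hyperfilter ℕ, ‖z‖ < n := by
      have : ∀ᶠ n : ℕ in atTop, ‖z‖ < n := tendsto_natCast_atTop_atTop.eventually_gt_atTop _
      exact this.filter_mono Nat.hyperfilter_le_atTop
    filter_upwards [h1] with n hn
    rw [good_comp _ _ (hr0 n)]
    apply good_of_lt (hf n)
    have h2 := hw n (w n + (r n : ℂ) * z) (by
      rw [dist_eq_norm, add_sub_cancel_left, norm_mul, Complex.norm_real,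
        Real.norm_of_nonneg (hr0 n).le, mul_comm]
      exact mul_le_mul_of_nonneg_right hn.le (hr0 n).le)
    have h3 := hr0 n
    change r n / 2 ≤ _ at h2
    linarith)
  refine ⟨w, fun n => (r n : ℂ), g, hg, ?_, hc⟩
  intro hconst
  obtain ⟨n, hn⟩ := (good_of_conv_const _ _ g hg hc hconst).exists
  rw [good_comp _ _ (hr0 n)] at hn
  simp only [mul_zero, add_zero] at hn
  have h1 : r n * 2 ≤ r n := le_csSup (good_bdd (hf n) (hnc n) _) hn
  have := hr0 n
  linarith

structure Hom {m : ℕ} (d : ℕ) (φ : (Fin m → ℂ) → ℂ) : Prop where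
  smul : ∀ (c : ℂ) v, φ (c • v) = c ^ d * φ v
  diff : Differentiable ℂ φ

lemma Hom.nrm_eq {m d : ℕ} {φ : (Fin m → ℂ) → ℂ} (h : Hom d φ) (f : ℂ → Fin m → ℂ) (i : Fin m)
    (w : ℂ) : φ (nrm f i w) = ((f w i)⁻¹) ^ d * φ (f w) := h.smul _ _

lemma Hom.nrm_zero {m d : ℕ} {φ : (Fin m → ℂ) → ℂ} (h : Hom d φ) (f : ℂ → Fin m → ℂ) (i : Fin m)
    (w : ℂ) (hw : f w i ≠ 0) : φ (nrm f i w) = 0 ↔ φ (f w) = 0 := by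
  rw [h.nrm_eq, mul_eq_zero, or_iff_right (pow_ne_zero _ (inv_ne_zero hw))]

lemma dichotomy {m d : ℕ} {φ : (Fin m → ℂ) → ℂ} (h : Hom d φ) {g : ℂ → Fin m → ℂ}
    (hg : IsCurve g) :
    (∀ z, φ (g z) = 0) ∨ (∀ z, ∀ᶠ w in 𝓝[≠] z, φ (g w) ≠ 0) := by
  have loc : ∀ z, (∀ᶠ w in 𝓝 z, φ (g w) = 0) ∨ (∀ᶠ w in 𝓝[≠] z, φ (g w) ≠ 0) := by
    intro z
    obtain ⟨i, hi⟩ := exists_coord (hg z).1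
    have hne := hg.eventually_ne hi
    have han : AnalyticAt ℂ (fun w => φ (nrm g i w)) z := by
      obtain ⟨r, hr, hb⟩ := Metric.eventually_nhds_iff_ball.1 hne
      have hd : DifferentiableOn ℂ (fun w => φ (nrm g i w)) (ball z r) :=
        h.diff.comp_differentiableOn (hg.differentiableOn hb)
      exact hd.analyticAt (ball_mem_nhds z hr)
    rcases han.eventually_eq_zero_or_eventually_ne_zero with h1 | h1
    · left
      filter_upwards [h1, hne] with w a b
      exact (h.nrm_zero g i w b).1 a
    · right
      filter_upwards [h1, hne.filter_mono nhdsWithin_le_nhds] with w a b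
      exact fun h0 => a ((h.nrm_zero g i w b).2 h0)
  set S : Set ℂ := {z | ∀ᶠ w in 𝓝 z, φ (g w) = 0} with hS
  have hSo : IsOpen S := by
    rw [isOpen_iff_mem_nhds]
    intro z hz
    exact (eventually_eventually_nhds.2 hz)
  have hSc : IsOpen Sᶜ := by
    rw [isOpen_iff_mem_nhds]
    intro z hz
    have h1 := (loc z).resolve_left hz
    have h2 := eventually_eventually_nhdsWithin.2 h1
    have h3 : ∀ᶠ w in 𝓝[≠] z, w ∈ Sᶜ := by
      filter_upwards [h1] with w hw hwS
      exact hw (Eventually.self_of_nhds (p := fun w => φ (g w) = 0) hwS)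
    rw [eventually_nhdsWithin_iff] at h3
    filter_upwards [h3] with w hw
    by_cases e : w = z
    · rw [e]; exact hz
    · exact hw e
  have hcl : IsClopen S := ⟨isOpen_compl_iff.1 hSc, hSo⟩
  rcases isClopen_iff.1 hcl with h0 | h0
  · right
    intro z
    refine (loc z).resolve_left (fun hz => ?_)
    have : z ∈ S := hz
    rw [h0] at this; exact this
  · left
    intro z
    have : z ∈ S := by rw [h0]; trivial
    exact Eventually.self_of_nhds (p := fun w => φ (g w) = 0) this

lemma tlu_joint {E : Type*} [NormedAddCommGroup E] {U : Filter ℕ} {F : ℕ → ℂ → E} {G : ℂ → E}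
    {s : Set ℂ} (hs : IsOpen s) (h : TendstoLocallyUniformlyOn F G U s) {x : ℂ} (hx : x ∈ s)
    (hG : ContinuousAt G x) :
    Tendsto (fun y : ℕ × ℂ => F y.1 y.2) (U ×ˢ 𝓝 x) (𝓝 (G x)) := by
  rw [Metric.tendsto_nhds]
  intro ε hε
  obtain ⟨t, ht, hev⟩ := (Metric.tendstoLocallyUniformlyOn_iff.1 h) (ε/2) (by positivity) x hx
  rw [hs.nhdsWithin_eq hx] at ht
  have h2 := (Metric.tendsto_nhds.1 hG) (ε/2) (by positivity)
  refine (eventually_prod_iff.2 ⟨_, hev, _, (show ∀ᶠ y in 𝓝 x, y ∈ t from ht).and h2, ?_⟩)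
  rintro n hn y ⟨hy1, hy2⟩
  have a := hn y hy1
  have := dist_triangle (F n y) (G y) (G x)
  rw [dist_comm] at a
  simp only
  linarith

lemma tlu_comp {E : Type*} [NormedAddCommGroup E] {U : Filter ℕ} {F : ℕ → ℂ → E} {G : ℂ → E}
    {s : Set ℂ} (hs : IsOpen s) (h : TendstoLocallyUniformlyOn F G U s)
    (hG : ContinuousOn G s) (φ : E → ℂ) (hφ : ∀ x ∈ s, ContinuousAt φ (G x)) :
    TendstoLocallyUniformlyOn (fun n z => φ (F n z)) (fun z => φ (G z)) U s := by
  rw [Metric.tendstoLocallyUniformlyOn_iff]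
  intro ε hε x hx
  have hGx : ContinuousAt G x := hG.continuousAt (hs.mem_nhds hx)
  have h1 := (hφ x hx).tendsto.comp (tlu_joint hs h hx hGx)
  have h2 := (Metric.tendsto_nhds.1 h1) (ε/2) (by positivity)
  obtain ⟨pa, ha, pb, hb, hab⟩ := eventually_prod_iff.1 h2
  have h3 := (Metric.tendsto_nhds.1 ((hφ x hx).comp hGx)) (ε/2) (by positivity)
  refine ⟨{y | pb y ∧ dist (φ (G y)) (φ (G x)) < ε/2},
    mem_nhdsWithin_of_mem_nhds (hb.and h3), ?_⟩
  filter_upwards [ha] with n hn y hy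
  have a := hab hn hy.1
  have b := hy.2
  simp only [Function.comp] at a
  have := dist_triangle_right (φ (G y)) (φ (F n y)) (φ (G x))
  linarith

lemma hurwitz_curve {m d : ℕ} {φ : (Fin m → ℂ) → ℂ} (h : Hom d φ) (U : Ultrafilter ℕ)
    {f : ℕ → ℂ → Fin m → ℂ} {g : ℂ → Fin m → ℂ} (hf : ∀ n, IsCurve (f n)) (hg : IsCurve g)
    (hc : Conv U f g) (z₀ : ℂ) (hne : ∀ᶠ w in 𝓝[≠] z₀, φ (g w) ≠ 0) (h0 : φ (g z₀) = 0)
    (δ : ℝ) (hδ : 0 < δ) : ∀ᶠ n in U, ∃ z ∈ ball z₀ δ, φ (f n z) = 0 := by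
  by_contra hcon
  rw [← Ultrafilter.eventually_not] at hcon
  obtain ⟨i, r, hr, h1, h2, h3⟩ := hc z₀
  set ρ := min r δ with hρ
  have hρ0 : 0 < ρ := lt_min hr hδ
  have hsr : ball z₀ ρ ⊆ ball z₀ r := ball_subset_ball (min_le_left _ _)
  have hsd : ball z₀ ρ ⊆ ball z₀ δ := ball_subset_ball (min_le_right _ _)
  have hgd : DifferentiableOn ℂ (nrm g i) (ball z₀ ρ) :=
    hg.differentiableOn (fun z hz => h2 z (hsr hz))
  refine hurwitz_aux U (fun n z => φ (nrm (f n) i z)) (fun z => φ (nrm g i z)) z₀ ρ hρ0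
    ?_ ?_ ?_ ?_ ?_
  · filter_upwards [hcon, h1] with n hn h1n
    push Not at hn
    refine ⟨h.diff.comp_differentiableOn ((hf n).differentiableOn (fun z hz => h1n z (hsr hz))), ?_⟩
    intro z hz
    rw [Ne, h.nrm_zero (f n) i z (h1n z (hsr hz))]
    exact hn z (hsd hz)
  · have : ∀ᶠ w in 𝓝[≠] z₀, w ∈ ball z₀ r :=
      mem_nhdsWithin_of_mem_nhds (ball_mem_nhds z₀ hr)
    filter_upwards [hne, this] with w hw hwb
    rw [Ne, h.nrm_zero g i w (h2 w hwb)]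
    exact hw
  · exact h.diff.comp_differentiableOn hgd
  · exact tlu_comp isOpen_ball (h3.mono hsr) hgd.continuousOn φ
      (fun x _ => h.diff.continuous.continuousAt)
  · exact (h.nrm_zero g i z₀ (h2 z₀ (mem_ball_self hr))).2 h0

lemma limit_eq {m d : ℕ} {φ ψ : (Fin m → ℂ) → ℂ} (h : Hom d φ) (h' : Hom d ψ) (U : Ultrafilter ℕ)
    {f : ℕ → ℂ → Fin m → ℂ} {g : ℂ → Fin m → ℂ} (hg : IsCurve g)
    (hc : Conv U f g) (z₀ : ℂ) (a : ℕ → ℂ) (ha : Tendsto a U (𝓝 0))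
    (hz : ∀ δ > 0, ∀ᶠ n in U, ∃ z ∈ ball z₀ δ, φ (f n z) = a n * ψ (f n z)) : φ (g z₀) = 0 := by
  obtain ⟨i, r, hr, h1, h2, h3⟩ := hc z₀
  have hzr := h2 z₀ (mem_ball_self hr)
  by_contra hne
  rw [← h.nrm_zero g i z₀ hzr] at hne
  have hj := tlu_joint isOpen_ball h3 (mem_ball_self hr) ((hg z₀).2 i hzr).continuousAt
  have j1 := (h.diff.continuous.tendsto (nrm g i z₀)).comp hj
  have j2 := (h'.diff.continuous.tendsto (nrm g i z₀)).comp hj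
  have j3 : Tendsto (fun y : ℕ × ℂ => a y.1) (U ×ˢ 𝓝 z₀) (𝓝 0) := ha.comp tendsto_fst
  have j4 := j1.sub (j3.mul j2)
  rw [zero_mul, sub_zero] at j4
  have j5 := j4.eventually_ne hne
  obtain ⟨pa, hpa, pb, hpb, hab⟩ := eventually_prod_iff.1 j5
  obtain ⟨δ, hδ, hb⟩ := Metric.eventually_nhds_iff_ball.1 hpb
  obtain ⟨n, hn, z, hzb, he⟩ := (hpa.and (hz δ hδ)).exists
  apply hab hn (hb z hzb)
  simp only [Function.comp]
  rw [h.nrm_eq, h'.nrm_eq, he]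
  ring

lemma fin3_cases {i j k : Fin 3} (h1 : i ≠ j) (h2 : i ≠ k) (h3 : j ≠ k) (l : Fin 3) :
    l = i ∨ l = j ∨ l = k := by omega

lemma fin3_third (i j : Fin 3) (h : i ≠ j) : ∃ k, i ≠ k ∧ j ≠ k := by
  revert i j; decide

lemma domin (G : Fin 3 → ℂ → ℂ) (hG : ∀ j, Differentiable ℂ (G j)) (T T' : ℂ → ℂ)
    (hT : Differentiable ℂ T) (hT' : Differentiable ℂ T')
    (hb : ∀ z i, (∀ j, j ≠ i → ‖G j z‖ < ‖G i z‖) → ‖T z‖ = ‖G i z‖ ∧ ‖T' z‖ = ‖G i z‖)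
    (hc : ∀ z i k, (∀ j, ‖G j z‖ ≤ ‖G i z‖) → ‖G k z‖ < ‖G i z‖ →
      ‖G i z‖ ≤ ‖T z‖ ∨ ‖G i z‖ ≤ ‖T' z‖) :
    ∃ i, ∀ z j, ‖G j z‖ ≤ ‖G i z‖ := by
  have hcont : ∀ j, Continuous (fun z => ‖G j z‖) := fun j => (hG j).continuous.norm
  by_cases hu : ∃ z i, ∀ j, j ≠ i → ‖G j z‖ < ‖G i z‖
  · obtain ⟨z₁, i, hi⟩ := hu
    have hev : ∀ᶠ z in 𝓝 z₁, ∀ j, j ≠ i → ‖G j z‖ < ‖G i z‖ := by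
      rw [eventually_all]
      intro j
      by_cases hj : j = i
      · simp [hj]
      · filter_upwards [(hcont j).continuousAt.eventually_lt (hcont i).continuousAt (hi j hj)]
          with z hz _ using hz
    have e1 := norm_eq_global T (G i) hT (hG i) z₁ (by
      filter_upwards [hev] with z hz using (hb z i hz).1)
    have e2 := norm_eq_global T' (G i) hT' (hG i) z₁ (by
      filter_upwards [hev] with z hz using (hb z i hz).2)
    refine ⟨i, fun z j => ?_⟩
    by_contra hlt
    push Not at hlt
    obtain ⟨m, hm⟩ := Finite.exists_max (fun i => ‖G i z‖)
    have h1 : ‖G i z‖ < ‖G m z‖ := hlt.trans_le (hm j)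
    rcases hc z m i hm h1 with h | h
    · rw [e1 z] at h; linarith
    · rw [e2 z] at h; linarith
  · push Not at hu
    by_cases ht : ∃ z i k, (∀ j, ‖G j z‖ ≤ ‖G i z‖) ∧ ‖G k z‖ < ‖G i z‖
    · obtain ⟨z₁, i, k, him, hk⟩ := ht
      obtain ⟨j, hji, hj⟩ := hu z₁ i
      have hik : i ≠ k := by rintro rfl; exact lt_irrefl _ hk
      have hjk : j ≠ k := by rintro rfl; linarith
      have hcase := fin3_cases hji.symm hik hjk
      have ev1 := (hcont k).continuousAt.eventually_lt (hcont i).continuousAt hk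
      have ev2 := (hcont k).continuousAt.eventually_lt (hcont j).continuousAt (hk.trans_le hj)
      have e := norm_eq_global (G j) (G i) (hG j) (hG i) z₁ (by
        filter_upwards [ev1, ev2] with z h1 h2
        rcases lt_trichotomy ‖G j z‖ ‖G i z‖ with h | h | h
        · obtain ⟨l, hl1, hl2⟩ := hu z i
          rcases hcase l with rfl | rfl | rfl
          · exact absurd rfl hl1
          · linarith
          · linarith
        · exact h
        · obtain ⟨l, hl1, hl2⟩ := hu z j
          rcases hcase l with rfl | rfl | rfl
          · linarith
          · exact absurd rfl hl1
          · linarith)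
      refine ⟨i, fun z l => ?_⟩
      rcases hcase l with rfl | rfl | rfl
      · exact le_rfl
      · exact (e z).le
      · by_contra hlt
        push Not at hlt
        obtain ⟨q, hq1, hq2⟩ := hu z l
        have := e z
        rcases hcase q with rfl | rfl | rfl
        · linarith
        · linarith
        · exact absurd rfl hq1
    · push Not at ht
      refine ⟨0, fun z j => ?_⟩
      obtain ⟨m, hm⟩ := Finite.exists_max (fun i => ‖G i z‖)
      exact (hm j).trans (ht z m 0 hm)

lemma root3 (U : Filter ℕ) [U.NeBot] (hU : U ≤ atTop) {x y₁ y₂ y₃ : ℕ → ℂ} {X Y₁ Y₂ Y₃ : ℂ}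
    (hx : Tendsto x U (𝓝 X)) (h1 : Tendsto y₁ U (𝓝 Y₁)) (h2 : Tendsto y₂ U (𝓝 Y₂))
    (h3 : Tendsto y₃ U (𝓝 Y₃)) (c c₁ c₂ c₃ : ℂ) (hc : c ≠ 0)
    (h : ∀ n, c * x n ^ (n+1) = c₁ * y₁ n ^ (n+1) + c₂ * y₂ n ^ (n+1) + c₃ * y₃ n ^ (n+1)) :
    ‖X‖ ≤ max ‖Y₁‖ (max ‖Y₂‖ ‖Y₃‖) := by
  by_contra hlt
  push Not at hlt
  obtain ⟨ρ, hρ1, hρ2⟩ := exists_between hlt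
  obtain ⟨σ, hσ1, hσ2⟩ := exists_between hρ2
  have l1 : ‖Y₁‖ < ρ := (le_max_left _ _).trans_lt hρ1
  have l2 : ‖Y₂‖ < ρ := ((le_max_left _ _).trans (le_max_right _ _)).trans_lt hρ1
  have l3 : ‖Y₃‖ < ρ := ((le_max_right _ _).trans (le_max_right _ _)).trans_lt hρ1
  have hρ0 : 0 < ρ := (norm_nonneg _).trans_lt l1
  set K := ‖c₁‖ + ‖c₂‖ + ‖c₃‖ with hK
  have hcp : 0 < ‖c‖ := norm_pos_iff.2 hc
  have hgrow : Tendsto (fun n : ℕ => (σ / ρ) ^ (n + 1)) atTop atTop :=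
    (tendsto_pow_atTop_atTop_of_one_lt ((one_lt_div hρ0).2 hσ1)).comp (tendsto_add_atTop_nat 1)
  have hev := (hgrow.mono_left hU).eventually_gt_atTop (K / ‖c‖)
  obtain ⟨n, a0, a1, a2, a3, a4⟩ := (hev.and ((h1.norm.eventually_lt_const l1).and
    ((h2.norm.eventually_lt_const l2).and ((h3.norm.eventually_lt_const l3).and
    (hx.norm.eventually_const_lt hσ2))))).exists
  have hσ0 : 0 ≤ σ := (hρ0.trans hσ1).le
  have b0 : ‖c‖ * σ ^ (n+1) ≤ ‖c * x n ^ (n+1)‖ := by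
    rw [norm_mul, norm_pow]; gcongr
  rw [h n] at b0
  have b1 : ‖c₁ * y₁ n ^ (n+1)‖ ≤ ‖c₁‖ * ρ ^ (n+1) := by
    rw [norm_mul, norm_pow]; gcongr
  have b2 : ‖c₂ * y₂ n ^ (n+1)‖ ≤ ‖c₂‖ * ρ ^ (n+1) := by
    rw [norm_mul, norm_pow]; gcongr
  have b3 : ‖c₃ * y₃ n ^ (n+1)‖ ≤ ‖c₃‖ * ρ ^ (n+1) := by
    rw [norm_mul, norm_pow]; gcongr
  have b4 := norm_add₃_le (a := c₁ * y₁ n ^ (n+1)) (b := c₂ * y₂ n ^ (n+1)) (c := c₃ * y₃ n ^ (n+1))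
  have b5 : ‖c‖ * σ ^ (n+1) ≤ K * ρ ^ (n+1) := by rw [hK]; linarith
  rw [div_pow, div_lt_div_iff₀ hcp (by positivity)] at a0
  linarith

lemma root_limit (U : Ultrafilter ℕ) (F : ℕ → ℂ → Fin 3 → ℂ)
    (hF : ∀ n, Differentiable ℂ (F n)) (G : ℂ → Fin 3 → ℂ)
    (hJ : ∀ z, Tendsto (fun y : ℕ × ℂ => F y.1 y.2) ((U : Filter ℕ) ×ˢ 𝓝 z) (𝓝 (G z)))
    (a : Fin 3 → ℂ) (hS : ∀ n z, ∑ j, a j * F n z j ^ (n+1) ≠ 0) :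
    ∃ (t : ℕ → ℂ → ℂ) (T : ℂ → ℂ), Differentiable ℂ T ∧
      (∀ n z, t n z ^ (n+1) = ∑ j, a j * F n z j ^ (n+1)) ∧
      ∀ z, Tendsto (fun n => t n z) U (𝓝 (T z)) := by
  have hFj : ∀ n j, Differentiable ℂ (fun z => F n z j) := fun n j =>
    differentiable_pi.1 (hF n) j
  have hlog := fun n => exists_entire_log (fun z => ∑ j, a j * F n z j ^ (n+1))
    (Differentiable.fun_sum fun j _ => ((hFj n j).pow (n+1)).const_mul (a j)) (hS n)
  choose L hL hLe using hlog
  set t : ℕ → ℂ → ℂ := fun n z => Complex.exp (L n z / ((n+1 : ℕ) : ℂ)) with ht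
  have htp : ∀ n z, t n z ^ (n+1) = ∑ j, a j * F n z j ^ (n+1) := by
    intro n z
    rw [ht]
    simp only
    rw [← Complex.exp_nat_mul, hLe n z]
    congr 1
    field_simp
  have htd : ∀ n, Differentiable ℂ (t n) := fun n => ((hL n).div_const _).cexp
  set A := max 1 (∑ j, ‖a j‖) with hA
  have hA1 : 1 ≤ A := le_max_left _ _
  have hbd : ∀ z, ∃ r > 0, ∀ᶠ n in U, ∀ w ∈ ball z r, ‖t n w‖ ≤ A * (‖G z‖ + 1) := by
    intro z
    have h1 := (hJ z).norm.eventually_lt_const (show ‖G z‖ < ‖G z‖ + 1 by linarith)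
    obtain ⟨pa, hpa, pb, hpb, hab⟩ := eventually_prod_iff.1 h1
    obtain ⟨r, hr, hb⟩ := Metric.eventually_nhds_iff_ball.1 hpb
    refine ⟨r, hr, ?_⟩
    filter_upwards [hpa] with n hn w hw
    have hFw : ‖F n w‖ < ‖G z‖ + 1 := hab hn (hb w hw)
    have hG0 : 0 ≤ ‖G z‖ + 1 := by positivity
    refine (pow_le_pow_iff_left₀ (norm_nonneg _) (by positivity) (Nat.succ_ne_zero n)).1 ?_
    rw [← norm_pow, Nat.succ_eq_add_one, htp n w]
    calc ‖∑ j, a j * F n w j ^ (n+1)‖ ≤ ∑ j, ‖a j‖ * (‖G z‖ + 1) ^ (n+1) := by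
          refine norm_sum_le_of_le _ fun j _ => ?_
          rw [norm_mul, norm_pow]
          gcongr
          exact (norm_le_pi_norm (F n w) j).trans hFw.le
      _ = (∑ j, ‖a j‖) * (‖G z‖ + 1) ^ (n+1) := by rw [Finset.sum_mul]
      _ ≤ A ^ (n+1) * (‖G z‖ + 1) ^ (n+1) := by
          gcongr
          exact (le_max_right _ _).trans (le_self_pow₀ hA1 (Nat.succ_ne_zero n))
      _ = _ := by rw [mul_pow]
  have hlim : ∀ z, ∃ y, Tendsto (fun n => t n z) U (𝓝 y) := by
    intro z
    obtain ⟨r, hr, h⟩ := hbd z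
    refine ultra_lim U _ (A * (‖G z‖ + 1)) ?_
    filter_upwards [h] with n hn using hn z (mem_ball_self hr)
  choose T hT using hlim
  refine ⟨t, T, ?_, htp, hT⟩
  intro z
  obtain ⟨r, hr, h⟩ := hbd z
  have h1 : TendstoLocallyUniformlyOn t T U (ball z r) :=
    mont_tendsto U t T (ball z r) isOpen_ball (A * (‖G z‖ + 1)) (by
      filter_upwards [h] with n hn using ⟨(htd n).differentiableOn, hn⟩) (fun w _ => hT w)
  have h2 := h1.differentiableOn (Eventually.of_forall fun n => (htd n).differentiableOn) isOpen_ball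
  exact h2.differentiableAt (ball_mem_nhds z hr)

lemma hom_coord {m : ℕ} (j : Fin m) : Hom 1 (fun v : Fin m → ℂ => v j) :=
  ⟨fun c v => by simp, differentiable_apply j⟩

lemma conv_joint {m : ℕ} {U : Filter ℕ} {f : ℕ → ℂ → Fin m → ℂ} {g : ℂ → Fin m → ℂ}
    (hg : IsCurve g) (hc : Conv U f g) (k : Fin m) (z : ℂ) (hk : g z k ≠ 0) :
    Tendsto (fun y : ℕ × ℂ => nrm (f y.1) k y.2) (U ×ˢ 𝓝 z) (𝓝 (nrm g k z)) := by
  obtain ⟨i, r, hr, h1, h2, h3⟩ := hc z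
  have hzi := h2 z (mem_ball_self hr)
  have hj := tlu_joint isOpen_ball h3 (mem_ball_self hr) ((hg z).2 i hzi).continuousAt
  have hjk : Tendsto (fun y : ℕ × ℂ => nrm (f y.1) i y.2 k) (U ×ˢ 𝓝 z) (𝓝 (nrm g i z k)) :=
    (tendsto_pi_nhds.1 hj) k
  have hne : nrm g i z k ≠ 0 := mul_ne_zero (inv_ne_zero hzi) hk
  have := (hjk.inv₀ hne).smul hj
  rw [← nrm_change g i k z hzi] at this
  refine this.congr' ?_
  refine eventually_prod_iff.2 ⟨_, h1, _, ball_mem_nhds z hr, ?_⟩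
  intro n hn w hw
  exact (nrm_change (f n) i k w (hn w hw)).symm

/-- Green's theorem: two linear combinations of three units. -/
lemma green (X : Fin 3 → ℂ → ℂ) (hX : ∀ j, Differentiable ℂ (X j)) (hX0 : ∀ j z, X j z ≠ 0)
    (a a' : Fin 3 → ℂ) (ha : ∀ j, a j ≠ 0) (ha' : ∀ j, a' j ≠ 0)
    (hmin : ∀ i j, i ≠ j → a i * a' j - a j * a' i ≠ 0)
    (hS : ∀ z, ∑ j, a j * X j z ≠ 0) (hS' : ∀ z, ∑ j, a' j * X j z ≠ 0) :
    ∀ i j z w, X i z * X j w = X j z * X i w := by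
  by_contra hcon
  choose u hu hue using fun j => exists_entire_log (X j) (hX j) (hX0 j)
  set f : ℕ → ℂ → Fin 3 → ℂ := fun n z j => Complex.exp (u j z / ((n+1 : ℕ) : ℂ)) with hf
  have hfp : ∀ n z j, f n z j ^ (n+1) = X j z := by
    intro n z j
    rw [hf]
    simp only
    rw [← Complex.exp_nat_mul, hue j z]
    congr 1
    field_simp
  have hf0 : ∀ n z j, f n z j ≠ 0 := fun n z j => Complex.exp_ne_zero _
  have hfd : ∀ n j, Differentiable ℂ (fun z => f n z j) := fun n j => ((hu j).div_const _).cexp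
  have hnd : ∀ n i, Differentiable ℂ (nrm (f n) i) := by
    intro n i
    rw [differentiable_pi]
    intro j
    exact ((hfd n i).inv (fun z => hf0 n z i)).mul (hfd n j)
  have hcur : ∀ n, IsCurve (f n) := by
    intro n z
    exact ⟨fun h => hf0 n z 0 (by rw [h]; rfl), fun i _ => (hnd n i).analyticAt z⟩
  have hnc : ∀ n, ¬ IsConst (f n) := by
    intro n hn
    apply hcon
    intro i j z w
    have := congrArg (· ^ (n+1)) (hn z w i j)
    simpa only [mul_pow, hfp] using this
  obtain ⟨α, β, g, hg, hgnc, hc⟩ := brody f hcur hnc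
  set U := hyperfilter ℕ with hUdef
  have hU : (U : Filter ℕ) ≤ atTop := Nat.hyperfilter_le_atTop
  obtain ⟨i₀, hi₀⟩ := exists_coord (hg 0).1
  have hgi : ∀ z, g z i₀ ≠ 0 := by
    rcases dichotomy (hom_coord i₀) hg with h | h
    · exact absurd (h 0) hi₀
    · intro z hz
      have := hurwitz_curve (hom_coord i₀) U (fun n => (hcur n).comp_affine (α n) (β n)) hg hc z
        (h z) hz 1 one_pos
      obtain ⟨n, w, -, hw⟩ := this.exists
      exact hf0 n _ i₀ hw
  set F : ℕ → ℂ → Fin 3 → ℂ := fun n => nrm (fun z => f n (α n + β n * z)) i₀ with hFdef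
  have hFd : ∀ n, Differentiable ℂ (F n) := by
    intro n
    have : Differentiable ℂ (fun z : ℂ => α n + β n * z) := by fun_prop
    exact (hnd n i₀).comp this
  have hGd : Differentiable ℂ (nrm g i₀) := fun z => ((hg z).2 i₀ (hgi z)).differentiableAt
  have hJ : ∀ z, Tendsto (fun y : ℕ × ℂ => F y.1 y.2) ((U : Filter ℕ) ×ˢ 𝓝 z) (𝓝 (nrm g i₀ z)) :=
    fun z => conv_joint hg hc i₀ z (hgi z)
  have hP : ∀ z j, Tendsto (fun n => F n z j) U (𝓝 (nrm g i₀ z j)) := by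
    intro z j
    have h1 : Tendsto (fun n : ℕ => (n, z)) U ((U : Filter ℕ) ×ˢ 𝓝 z) :=
      tendsto_id.prodMk tendsto_const_nhds
    exact (tendsto_pi_nhds.1 ((hJ z).comp h1)) j
  have hFS : ∀ (b : Fin 3 → ℂ), (∀ z, ∑ j, b j * X j z ≠ 0) →
      ∀ n z, ∑ j, b j * F n z j ^ (n+1) ≠ 0 := by
    intro b hb n z
    have : ∑ j, b j * F n z j ^ (n+1) =
        (X i₀ (α n + β n * z))⁻¹ * ∑ j, b j * X j (α n + β n * z) := by
      rw [Finset.mul_sum]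
      refine Finset.sum_congr rfl fun j _ => ?_
      rw [hFdef]
      simp only [nrm_apply, mul_pow, inv_pow, hfp]
      ring
    rw [this]
    exact mul_ne_zero (inv_ne_zero (hX0 _ _)) (hb _)
  obtain ⟨t, T, hT, htp, htl⟩ := root_limit U F hFd (nrm g i₀) hJ a (hFS a hS)
  obtain ⟨t', T', hT', htp', htl'⟩ := root_limit U F hFd (nrm g i₀) hJ a' (hFS a' hS')
  have hGj : ∀ j, Differentiable ℂ (fun z => nrm g i₀ z j) := fun j => differentiable_pi.1 hGd j
  have expand : ∀ (b : Fin 3 → ℂ) (v : Fin 3 → ℂ) (N : ℕ) (i j k : Fin 3), i ≠ j → i ≠ k → j ≠ k →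
      ∑ l, b l * v l ^ N = b i * v i ^ N + b j * v j ^ N + b k * v k ^ N := by
    intro b v N i j k h1 h2 h3
    have : (Finset.univ : Finset (Fin 3)) = {i, j, k} := by
      ext l
      simpa using fin3_cases h1 h2 h3 l
    rw [this, Finset.sum_insert (by simp [h1, h2]), Finset.sum_insert (by simp [h3]),
      Finset.sum_singleton]
    ring
  -- upper and lower bounds at a unique maximum
  have uniq : ∀ (b : Fin 3 → ℂ) (s : ℕ → ℂ → ℂ) (S : ℂ → ℂ), (∀ j, b j ≠ 0) →
      (∀ n z, s n z ^ (n+1) = ∑ j, b j * F n z j ^ (n+1)) →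
      (∀ z, Tendsto (fun n => s n z) U (𝓝 (S z))) →
      ∀ z i, (∀ j, j ≠ i → ‖nrm g i₀ z j‖ < ‖nrm g i₀ z i‖) → ‖S z‖ = ‖nrm g i₀ z i‖ := by
    intro b s S hb hsp hsl z i hi
    obtain ⟨j, hj⟩ := (by decide : ∀ i : Fin 3, ∃ j, i ≠ j) i
    obtain ⟨k, hik, hjk⟩ := fin3_third i j hj
    have lj := hi j hj.symm
    have lk := hi k hik.symm
    apply le_antisymm
    · have := root3 U hU (hsl z) (hP z i) (hP z j) (hP z k) 1 (b i) (b j) (b k) one_ne_zero (by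
        intro n
        rw [one_mul, hsp, expand b (F n z) (n+1) i j k hj hik hjk])
      rcases le_max_iff.1 this with h | h
      · exact h
      · rcases le_max_iff.1 h with h | h <;> linarith
    · have := root3 U hU (hP z i) (hsl z) (hP z j) (hP z k) (b i) 1 (-b j) (-b k) (hb i) (by
        intro n
        rw [hsp, expand b (F n z) (n+1) i j k hj hik hjk]
        ring)
      rcases le_max_iff.1 this with h | h
      · exact h
      · rcases le_max_iff.1 h with h | h <;> linarith
  obtain ⟨i, hi⟩ := domin (fun j z => nrm g i₀ z j) hGj T T' hT hT'
    (fun z i h => ⟨uniq a t T ha htp htl z i h, uniq a' t' T' ha' htp' htl' z i h⟩) (by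
      intro z i k hm hk
      have hik : i ≠ k := by rintro rfl; exact lt_irrefl _ hk
      obtain ⟨j, hij, hkj⟩ := fin3_third i k hik
      have := root3 U hU (hP z i) (htl z) (htl' z) (hP z k)
        (a i * a' j - a j * a' i) (a' j) (- a j) (- (a k * a' j - a j * a' k)) (hmin i j hij) (by
        intro n
        rw [htp, htp', expand a (F n z) (n+1) i j k hij hik hkj.symm,
          expand a' (F n z) (n+1) i j k hij hik hkj.symm]
        ring)
      rcases le_max_iff.1 this with h | h
      · exact Or.inl h
      · rcases le_max_iff.1 h with h | h
        · exact Or.inr h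
        · exact absurd h (not_le.2 hk))
  apply hgnc
  refine const_of_bounded hg i (fun w j => ?_)
  have h1 := hi w j
  simp only [nrm_apply, norm_mul, norm_inv] at h1
  have h2 := le_of_mul_le_mul_left h1 (inv_pos.2 (norm_pos_iff.2 (hgi w)))
  have := norm_nonneg (g w i)
  linarith

/-- General position for six linear forms. -/
def GP (L : Fin 6 → (Fin 4 → ℂ) →ₗ[ℂ] ℂ) : Prop :=
  ∀ i j k l : Fin 6, i ≠ j → i ≠ k → i ≠ l → j ≠ k → j ≠ l → k ≠ l →
    ∀ v, L i v = 0 → L j v = 0 → L k v = 0 → L l v = 0 → v = 0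

lemma const_crit {L : Fin 6 → (Fin 4 → ℂ) →ₗ[ℂ] ℂ} (hG : GP L) {k a b c : Fin 6}
    (h1 : k ≠ a) (h2 : k ≠ b) (h3 : k ≠ c) (h4 : a ≠ b) (h5 : a ≠ c) (h6 : b ≠ c)
    (f : ℂ → Fin 4 → ℂ) (ha : ∀ z, L a (f z) ≠ 0)
    (hk : ∀ z w, L k (f z) * L a (f w) = L k (f w) * L a (f z))
    (hb : ∀ z w, L b (f z) * L a (f w) = L b (f w) * L a (f z))
    (hc : ∀ z w, L c (f z) * L a (f w) = L c (f w) * L a (f z)) : IsConst f := by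
  intro z w i j
  have h0 : L a (f w) • f z - L a (f z) • f w = 0 := by
    apply hG k a b c h1 h2 h3 h4 h5 h6
    · have := hk z w
      simp only [map_sub, map_smul, smul_eq_mul]; linear_combination this
    · simp only [map_sub, map_smul, smul_eq_mul]; ring
    · have := hb z w
      simp only [map_sub, map_smul, smul_eq_mul]; linear_combination this
    · have := hc z w
      simp only [map_sub, map_smul, smul_eq_mul]; linear_combination this
  have e1 := congr_fun h0 i
  have e2 := congr_fun h0 j
  simp only [Pi.sub_apply, Pi.smul_apply, smul_eq_mul, Pi.zero_apply] at e1 e2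
  apply mul_left_cancel₀ (ha w)
  linear_combination (f w j) * e1 - (f w i) * e2

lemma ex_fourth : ∀ i j k : Fin 6, ∃ a, i ≠ a ∧ j ≠ a ∧ k ≠ a := by decide

lemma const3 {L : Fin 6 → (Fin 4 → ℂ) →ₗ[ℂ] ℂ} (hG : GP L) {i j k : Fin 6}
    (h1 : i ≠ j) (h2 : i ≠ k) (h3 : j ≠ k)
    (f : ℂ → Fin 4 → ℂ) (hf : ∀ z, f z ≠ 0) (hi : ∀ z, L i (f z) = 0)
    (hj : ∀ z, L j (f z) = 0) (hk : ∀ z, L k (f z) = 0) : IsConst f := by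
  obtain ⟨a, ha1, ha2, ha3⟩ := ex_fourth i j k
  refine const_crit hG ha1 h1 h2 ha2.symm ha3.symm h3 f (fun z h => hf z ?_) ?_ ?_ ?_
  · exact hG i j k a h1 h2 ha1 h3 ha2 ha3 _ (hi z) (hj z) (hk z) h
  · intro z w; rw [hi, hi]; ring
  · intro z w; rw [hj, hj]; ring
  · intro z w; rw [hk, hk]; ring

lemma dual {L : Fin 6 → (Fin 4 → ℂ) →ₗ[ℂ] ℂ} (hG : GP L) {k a b c : Fin 6}
    (h1 : k ≠ a) (h2 : k ≠ b) (h3 : k ≠ c) (h4 : a ≠ b) (h5 : a ≠ c) (h6 : b ≠ c)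
    (x y z w : ℂ) : ∃ v, L k v = x ∧ L a v = y ∧ L b v = z ∧ L c v = w := by
  let Φ : (Fin 4 → ℂ) →ₗ[ℂ] (Fin 4 → ℂ) := LinearMap.pi ![L k, L a, L b, L c]
  have hinj : Function.Injective Φ := by
    rw [injective_iff_map_eq_zero]
    intro v hv
    have e0 := congr_fun hv 0
    have e1 := congr_fun hv 1
    have e2 := congr_fun hv 2
    have e3 := congr_fun hv 3
    simp [Φ] at e0 e1 e2 e3
    exact hG k a b c h1 h2 h3 h4 h5 h6 v e0 e1 e2 e3
  obtain ⟨v, hv⟩ := (LinearMap.injective_iff_surjective.1 hinj) ![x, y, z, w]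
  have e0 := congr_fun hv 0
  have e1 := congr_fun hv 1
  have e2 := congr_fun hv 2
  have e3 := congr_fun hv 3
  simp [Φ] at e0 e1 e2 e3
  exact ⟨v, e0, e1, e2, e3⟩

lemma ratio_diff {m : ℕ} (φ ψ : (Fin m → ℂ) →ₗ[ℂ] ℂ) {f : ℂ → Fin m → ℂ} (hf : IsCurve f)
    (h : ∀ z, ψ (f z) ≠ 0) : Differentiable ℂ (fun z => φ (f z) / ψ (f z)) := by
  intro z
  obtain ⟨i, hi⟩ := exists_coord (hf z).1
  have ha := (hf z).2 i hi
  have e : (fun z => φ (f z) / ψ (f z)) =ᶠ[𝓝 z] (fun z => φ (nrm f i z) / ψ (nrm f i z)) := by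
    filter_upwards [hf.eventually_ne hi] with w hw
    simp only [nrm, map_smul, smul_eq_mul]
    rw [mul_div_mul_left _ _ (inv_ne_zero hw)]
  have d1 : DifferentiableAt ℂ (fun z => φ (nrm f i z)) z :=
    (φ.toContinuousLinearMap.differentiableAt).comp z ha.differentiableAt
  have d2 : DifferentiableAt ℂ (fun z => ψ (nrm f i z)) z :=
    (ψ.toContinuousLinearMap.differentiableAt).comp z ha.differentiableAt
  refine DifferentiableAt.congr_of_eventuallyEq (d1.div d2 ?_) e
  simp only [nrm, map_smul, smul_eq_mul]
  exact mul_ne_zero (inv_ne_zero hi) (h z)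

lemma plane_const {L : Fin 6 → (Fin 4 → ℂ) →ₗ[ℂ] ℂ} (hG : GP L) (k : Fin 6)
    {f : ℂ → Fin 4 → ℂ} (hf : IsCurve f) (hk : ∀ z, L k (f z) = 0)
    (hj : ∀ j, j ≠ k → ∀ z, L j (f z) ≠ 0) : IsConst f := by
  obtain ⟨x, d, e, hx, hkx, hdx, hex, hkd, hke, hde⟩ : ∃ (x : Fin 3 → Fin 6) (d e : Fin 6),
      (∀ i j, i ≠ j → x i ≠ x j) ∧ (∀ i, k ≠ x i) ∧ (∀ i, d ≠ x i) ∧ (∀ i, e ≠ x i) ∧ k ≠ d ∧ k ≠ e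
      ∧ d ≠ e := by
    refine ⟨![k + 1, k + 2, k + 3], k + 4, k + 5, ?_⟩
    clear hk hj hf
    revert k; decide
  have hE : ∀ i : Fin 3, ∃ v, L k v = 0 ∧ ∀ j, L (x j) v = if i = j then 1 else 0 := by
    intro i
    obtain ⟨v, h0, h1, h2, h3⟩ := dual hG (hkx 0) (hkx 1) (hkx 2) (hx 0 1 (by decide))
      (hx 0 2 (by decide)) (hx 1 2 (by decide)) 0 (if i = 0 then 1 else 0) (if i = 1 then 1 else 0)
      (if i = 2 then 1 else 0)
    refine ⟨v, h0, fun j => ?_⟩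
    fin_cases j <;> assumption
  choose E hE0 hE1 using hE
  have hexp : ∀ d v, L k v = 0 → L d v = ∑ j, L d (E j) * L (x j) v := by
    intro d v hv
    have h0 : v - ∑ j, L (x j) v • E j = 0 := by
      have hx' : ∀ i, L (x i) (v - ∑ j, L (x j) v • E j) = 0 := by
        intro i
        simp [hE1]
      refine hG k (x 0) (x 1) (x 2) (hkx 0) (hkx 1) (hkx 2) (hx 0 1 (by decide))
        (hx 0 2 (by decide)) (hx 1 2 (by decide)) _ ?_ (hx' 0) (hx' 1) (hx' 2)
      simp [hE0, hv]
    have := congr_arg (L d) h0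
    simp only [map_sub, map_sum, map_smul, smul_eq_mul, map_zero] at this
    rw [sub_eq_zero.1 this]
    exact Finset.sum_congr rfl fun j _ => mul_comm _ _
  have hcoef : ∀ d, k ≠ d → (∀ i, d ≠ x i) → ∀ j, L d (E j) ≠ 0 := by
    intro d hkd hdx j h
    obtain ⟨i, hi⟩ := (by decide : ∀ j : Fin 3, ∃ i, j ≠ i) j
    obtain ⟨m, hm1, hm2⟩ := fin3_third j i hi
    have h0 := hG k d (x i) (x m) hkd (hkx i) (hkx m) (hdx i) (hdx m) (hx _ _ hm2) (E j) (hE0 j) h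
      (by rw [hE1, if_neg hi]) (by rw [hE1, if_neg hm1])
    have := hE1 j j
    rw [h0] at this
    simp at this
  have key := green (fun j z => L (x j) (f z) / L (x 0) (f z))
    (fun j => ratio_diff _ _ hf (hj (x 0) (hkx 0).symm))
    (fun j z => div_ne_zero (hj _ (hkx j).symm z) (hj _ (hkx 0).symm z))
    (fun j => L d (E j)) (fun j => L e (E j)) (hcoef d hkd hdx) (hcoef e hke hex) (by
      intro i j hij h
      obtain ⟨m, hm1, hm2⟩ := fin3_third i j hij
      have h0 := hG k (x m) d e (hkx m) hkd hke (hdx m).symm (hex m).symm hde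
        (L d (E j) • E i - L d (E i) • E j) (by simp [hE0])
        (by simp [hE1, hm1, hm2])
        (by simp; ring) (by simp; linear_combination (-1 : ℂ) * h)
      have := congr_arg (L (x i)) h0
      simp [hE1, hij.symm] at this
      exact hcoef d hkd hdx j this) (by
      intro z
      have := hexp d (f z) (hk z)
      simp only [mul_div_assoc', ← Finset.sum_div]
      rw [← this]
      exact div_ne_zero (hj _ hkd.symm z) (hj _ (hkx 0).symm z)) (by
      intro z
      have := hexp e (f z) (hk z)
      simp only [mul_div_assoc', ← Finset.sum_div]
      rw [← this]
      exact div_ne_zero (hj _ hke.symm z) (hj _ (hkx 0).symm z))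
  have key2 : ∀ i z w, L (x i) (f z) * L (x 0) (f w) = L (x i) (f w) * L (x 0) (f z) := by
    intro i z w
    have := key i 0 z w
    have a1 := hj _ (hkx 0).symm z
    have a2 := hj _ (hkx 0).symm w
    simp only [div_self a1, div_self a2, mul_one, one_mul] at this
    rwa [div_eq_div_iff a1 a2] at this
  refine const_crit hG (hkx 0) (hkx 1) (hkx 2) (hx 0 1 (by decide))
      (hx 0 2 (by decide)) (hx 1 2 (by decide)) f (hj _ (hkx 0).symm) ?_ (key2 1) (key2 2)
  intro z w; rw [hk, hk]; ring

lemma line_const {L : Fin 6 → (Fin 4 → ℂ) →ₗ[ℂ] ℂ} (hG : GP L) {k j a b c : Fin 6}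
    (hkj : k ≠ j) (hka : k ≠ a) (hkb : k ≠ b) (hkc : k ≠ c) (hja : j ≠ a) (hjb : j ≠ b)
    (hjc : j ≠ c) (hab : a ≠ b) (hac : a ≠ c) (hbc : b ≠ c)
    {f : ℂ → Fin 4 → ℂ} (hf : IsCurve f) (hk : ∀ z, L k (f z) = 0) (hj : ∀ z, L j (f z) = 0)
    (ha : ∀ z, L a (f z) ≠ 0) (hb : ∀ z, L b (f z) ≠ 0) (hc : ∀ z, L c (f z) ≠ 0) : IsConst f := by
  obtain ⟨E, E0, E1, E2, E3⟩ := dual hG hkj hka hkb hja hjb hab 0 0 1 0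
  obtain ⟨F, F0, F1, F2, F3⟩ := dual hG hkj hka hkb hja hjb hab 0 0 0 1
  have hexp : ∀ v, L k v = 0 → L j v = 0 → L c v = L c E * L a v + L c F * L b v := by
    intro v hk hj
    have h0 : v - L a v • E - L b v • F = 0 := by
      refine hG k j a b hkj hka hkb hja hjb hab _ ?_ ?_ ?_ ?_ <;> simp [*]
    have := congr_arg (L c) h0
    simp only [map_sub, map_smul, smul_eq_mul, map_zero] at this
    linear_combination this
  have hα : L c E ≠ 0 := by
    intro h
    have := hG k j b c hkj hkb hkc hjb hjc hbc E E0 E1 E3 h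
    rw [this] at E2; simp at E2
  have hβ : L c F ≠ 0 := by
    intro h
    have := hG k j a c hkj hka hkc hja hjc hac F F0 F1 F2 h
    rw [this] at F3; simp at F3
  have hB := ratio_diff (L b) (L a) hf ha
  have hsum : ∀ z, L c E + L c F * (L b (f z) / L a (f z)) ≠ 0 := by
    intro z h
    have e := hexp (f z) (hk z) (hj z)
    apply hc z
    rw [e]
    have := ha z
    field_simp at h
    linear_combination h
  have key := green ![fun _ => L c E, fun _ => L c E, fun z => 2 * (L c F * (L b (f z) / L a (f z)))]
    (by
      intro j
      fin_cases j
      · exact differentiable_const _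
      · exact differentiable_const _
      · exact (hB.const_mul _).const_mul _)
    (by
      intro j z
      fin_cases j
      · exact hα
      · exact hα
      · exact mul_ne_zero two_ne_zero (mul_ne_zero hβ (div_ne_zero (hb z) (ha z))))
    ![1, 1, 1] ![1, 3, 2] (by intro j; fin_cases j <;> simp) (by intro j; fin_cases j <;> simp)
    (by intro i j hij; fin_cases i <;> fin_cases j <;> first | exact absurd rfl hij | norm_num)
    (by
      intro z h
      apply hsum z
      simp only [Fin.sum_univ_three, Matrix.cons_val_zero, Matrix.cons_val_one, Matrix.cons_val] at h
      linear_combination h / 2)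
    (by
      intro z h
      apply hsum z
      simp only [Fin.sum_univ_three, Matrix.cons_val_zero, Matrix.cons_val_one, Matrix.cons_val] at h
      linear_combination h / 4)
  refine const_crit hG hka hkj hkb hja.symm hab hjb f ha ?_ ?_ ?_
  · intro z w; rw [hk, hk]; ring
  · intro z w; rw [hj, hj]; ring
  · intro z w
    have := key 2 0 z w
    simp only [Matrix.cons_val_zero, Matrix.cons_val] at this
    have h2 : L b (f z) / L a (f z) = L b (f w) / L a (f w) := by
      apply mul_left_cancel₀ (mul_ne_zero (mul_ne_zero two_ne_zero hβ) hα)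
      linear_combination this
    rwa [div_eq_div_iff (ha z) (ha w)] at h2

/-- Entire curves in the plane `k` meeting the other planes only at allowed places. -/
def Adm (L : Fin 6 → (Fin 4 → ℂ) →ₗ[ℂ] ℂ) (s : (Fin 4 → ℂ) → ℂ) (A : Finset (Sym2 (Fin 6)))
    (k : Fin 6) (f : ℂ → Fin 4 → ℂ) : Prop :=
  IsCurve f ∧ (∀ z, L k (f z) = 0) ∧
    ∀ j, j ≠ k → ∀ z, L j (f z) = 0 → s(k, j) ∈ A ∧ s (f z) = 0

/-- All admissible curves are constant. -/
def Hyp (L : Fin 6 → (Fin 4 → ℂ) →ₗ[ℂ] ℂ) (s : (Fin 4 → ℂ) → ℂ) (A : Finset (Sym2 (Fin 6))) : Prop :=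
  ∀ k f, Adm L s A k f → IsConst f

/-- `s` does not vanish at triple points. -/
def Trip (L : Fin 6 → (Fin 4 → ℂ) →ₗ[ℂ] ℂ) (s : (Fin 4 → ℂ) → ℂ) : Prop :=
  ∀ v : Fin 4 → ℂ, v ≠ 0 → ∀ i j k : Fin 6, i ≠ j → i ≠ k → j ≠ k →
    L i v = 0 → L j v = 0 → L k v = 0 → s v ≠ 0

lemma hom_lin {m : ℕ} (φ : (Fin m → ℂ) →ₗ[ℂ] ℂ) : Hom 1 (fun v => φ v) :=
  ⟨fun c v => by simp, φ.toContinuousLinearMap.differentiable⟩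

lemma hom_prod (L : Fin 6 → (Fin 4 → ℂ) →ₗ[ℂ] ℂ) : Hom 6 (fun v => ∏ i, L i v) := by
  refine ⟨fun c v => ?_, ?_⟩
  · simp [Finset.prod_mul_distrib]
  · intro v
    exact (HasFDerivAt.finsetProd (u := Finset.univ) (g := fun (i : Fin 6) v => L i v)
      fun i _ => ((hom_lin (L i)).diff v).hasFDerivAt).differentiableAt

lemma zero_pts {d : ℕ} {φ : (Fin 4 → ℂ) → ℂ} (h : Hom d φ) (U : Ultrafilter ℕ)
    {f : ℕ → ℂ → Fin 4 → ℂ} {g : ℂ → Fin 4 → ℂ} (hf : ∀ n, IsCurve (f n)) (hg : IsCurve g)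
    (hc : Conv U f g) (hne : ¬ ∀ z, φ (g z) = 0) (z₀ : ℂ) (h0 : φ (g z₀) = 0) (δ : ℝ) (hδ : 0 < δ) :
    ∀ᶠ n in U, ∃ z ∈ ball z₀ δ, φ (f n z) = 0 :=
  hurwitz_curve h U hf hg hc z₀ (((dichotomy h hg).resolve_left hne) z₀) h0 δ hδ

lemma zero_limit {d e : ℕ} {φ ψ χ : (Fin 4 → ℂ) → ℂ} (h : Hom d φ) (hψ : Hom e ψ) (hχ : Hom e χ)
    (U : Ultrafilter ℕ)
    {f : ℕ → ℂ → Fin 4 → ℂ} {g : ℂ → Fin 4 → ℂ} (hf : ∀ n, IsCurve (f n)) (hg : IsCurve g)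
    (hc : Conv U f g) (hne : ¬ ∀ z, φ (g z) = 0) (z₀ : ℂ) (h0 : φ (g z₀) = 0)
    (a : ℕ → ℂ) (ha : Tendsto a U (𝓝 0))
    (H : ∀ᶠ n in U, ∀ z, φ (f n z) = 0 → ψ (f n z) = a n * χ (f n z)) : ψ (g z₀) = 0 := by
  refine limit_eq hψ hχ U hg hc z₀ a ha (fun δ hδ => ?_)
  filter_upwards [H, zero_pts h U hf hg hc hne z₀ h0 δ hδ] with n hn ⟨z, hz, hz0⟩
  exact ⟨z, hz, hn z hz0⟩

lemma three_others (k j l : Fin 6) : ∃ a b c : Fin 6, a ≠ b ∧ a ≠ c ∧ b ≠ c ∧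
    (k ≠ a ∧ j ≠ a ∧ l ≠ a) ∧ (k ≠ b ∧ j ≠ b ∧ l ≠ b) ∧ (k ≠ c ∧ j ≠ c ∧ l ≠ c) := by
  have h : 2 < (Finset.univ \ {k, j, l} : Finset (Fin 6)).card := by
    revert k j l; decide
  obtain ⟨a, b, c, ha, hb, hc, hab, hac, hbc⟩ := Finset.two_lt_card_iff.1 h
  simp only [Finset.mem_sdiff, Finset.mem_univ, true_and, Finset.mem_insert, Finset.mem_singleton,
    not_or] at ha hb hc
  exact ⟨a, b, c, hab, hac, hbc, ⟨Ne.symm ha.1, Ne.symm ha.2.1, Ne.symm ha.2.2⟩,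
    ⟨Ne.symm hb.1, Ne.symm hb.2.1, Ne.symm hb.2.2⟩, ⟨Ne.symm hc.1, Ne.symm hc.2.1, Ne.symm hc.2.2⟩⟩

/-- A curve in two planes is constant when its other intersections (but one plane) lie on `s`. -/
lemma two_planes {L : Fin 6 → (Fin 4 → ℂ) →ₗ[ℂ] ℂ} (hG : GP L) {s : (Fin 4 → ℂ) → ℂ} (hT : Trip L s)
    {g : ℂ → Fin 4 → ℂ} (hg : IsCurve g) {k j : Fin 6} (l : Fin 6) (hkj : k ≠ j)
    (hk : ∀ z, L k (g z) = 0) (hj : ∀ z, L j (g z) = 0)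
    (H : ∀ m, k ≠ m → l ≠ m → ¬ (∀ z, L m (g z) = 0) → ∀ z, L m (g z) = 0 → s (g z) = 0) :
    IsConst g := by
  by_contra hnc
  have hz : ∀ m, k ≠ m ∧ j ≠ m ∧ l ≠ m → ∀ z, L m (g z) ≠ 0 := by
    rintro m ⟨h1, h2, h3⟩ z h
    refine hT (g z) (hg z).1 k j m hkj h1 h2 (hk z) (hj z) h (H m h1 h3 (fun hm => hnc ?_) z h)
    exact const3 hG hkj h1 h2 g (fun z => (hg z).1) hk hj hm
  obtain ⟨a, b, c, hab, hac, hbc, ha, hb, hc⟩ := three_others k j l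
  exact hnc (line_const hG hkj ha.1 hb.1 hc.1 ha.2.1 hb.2.1 hc.2.1 hab hac hbc hg hk hj
    (hz a ha) (hz b hb) (hz c hc))

lemma lin_limit {L : (Fin 4 → ℂ) →ₗ[ℂ] ℂ} (U : Ultrafilter ℕ)
    {f : ℕ → ℂ → Fin 4 → ℂ} {g : ℂ → Fin 4 → ℂ} (hg : IsCurve g)
    (hc : Conv U f g) (H : ∀ᶠ n in U, ∀ z, L (f n z) = 0) (z : ℂ) : L (g z) = 0 := by
  refine limit_eq (hom_lin L) (hom_lin L) U hg hc z (fun _ => 0) tendsto_const_nhds (fun δ hδ => ?_)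
  filter_upwards [H] with n hn
  exact ⟨z, mem_ball_self hδ, by rw [hn]; ring⟩

lemma step_aux {L : Fin 6 → (Fin 4 → ℂ) →ₗ[ℂ] ℂ} (hG : GP L) {s h : (Fin 4 → ℂ) → ℂ}
    (hs : Hom 6 s) (hh : Hom 6 h) (hT : Trip L s) {A : Finset (Sym2 (Fin 6))} (hA : Hyp L s A)
    {k l : Fin 6} (hkl : k ≠ l) (h1 : ∀ v, h v = 0 → ∃ m, m ≠ k ∧ m ≠ l ∧ L m v = 0)
    (h2 : ∀ v m, m ≠ k → m ≠ l → L m v = 0 → h v = 0)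
    (U : Ultrafilter ℕ) (hU : (U : Filter ℕ) ≤ atTop)
    {F : ℕ → ℂ → Fin 4 → ℂ} {g : ℂ → Fin 4 → ℂ} (hF : ∀ n, IsCurve (F n)) (hg : IsCurve g)
    (hc : Conv U F g)
    (hadm : ∀ᶠ n : ℕ in U, Adm L (fun v => s v + (n : ℂ) * h v) (insert s(k, l) A) k (F n)) :
    IsConst g := by
  have hgk : ∀ z, L k (g z) = 0 := lin_limit U hg hc (hadm.mono fun n hn => hn.2.1)
  have p1 : ∀ j, k ≠ j → l ≠ j → ¬ (∀ z, L j (g z) = 0) → ∀ z, L j (g z) = 0 →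
      s(k, j) ∈ A ∧ s (g z) = 0 := by
    intro j hkj hlj hne z hz
    have hD : s(k, j) ≠ s(k, l) := by
      intro h
      rw [Sym2.eq_iff] at h
      rcases h with h | h
      · exact hlj h.2.symm
      · exact hkl h.1
    have hin : ∀ᶠ n in U, ∀ w, L j (F n w) = 0 → s(k, j) ∈ A ∧ s (F n w) = 0 := by
      filter_upwards [hadm] with n hn w hw
      obtain ⟨q1, q2⟩ := hn.2.2 j hkj.symm w hw
      simp only at q2
      rw [h2 _ j hkj.symm hlj.symm hw, mul_zero, add_zero] at q2
      exact ⟨(Finset.mem_insert.1 q1).resolve_left hD, q2⟩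
    constructor
    · obtain ⟨n, q, w, -, hw⟩ := (hin.and (zero_pts (hom_lin (L j)) U hF hg hc hne z hz 1 one_pos)).exists
      exact (q w hw).1
    · refine zero_limit (hom_lin (L j)) hs hs U hF hg hc hne z hz (fun _ => 0) tendsto_const_nhds ?_
      filter_upwards [hin] with n hn w hw
      rw [(hn w hw).2, mul_zero]
  have p2 : ¬ (∀ z, L l (g z) = 0) → ∀ z, L l (g z) = 0 → ∃ m, m ≠ k ∧ m ≠ l ∧ L m (g z) = 0 := by
    intro hne z hz
    apply h1
    refine zero_limit (hom_lin (L l)) hh hs U hF hg hc hne z hz (fun n => -(n : ℂ)⁻¹) ?_ ?_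
    · have : Tendsto (fun n : ℕ => -(n : ℂ)⁻¹) atTop (𝓝 (-0)) :=
        (tendsto_inv_atTop_nhds_zero_nat (𝕜 := ℂ)).neg
      rw [neg_zero] at this
      exact this.mono_left hU
    · filter_upwards [hadm, hU (eventually_ge_atTop 1)] with n hn hn1 w hw
      have q := (hn.2.2 l hkl.symm w hw).2
      simp only at q
      have : (n : ℂ) ≠ 0 := by exact_mod_cast (Nat.pos_iff_ne_zero.1 hn1)
      field_simp
      linear_combination q
  by_cases hB : ∃ j, k ≠ j ∧ ∀ z, L j (g z) = 0
  · obtain ⟨j, hkj, hj⟩ := hB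
    exact two_planes hG hT hg l hkj hgk hj fun m hm1 hm2 hm3 z hz => (p1 m hm1 hm2 hm3 z hz).2
  · push Not at hB
    have hB' : ∀ j, k ≠ j → ¬ ∀ z, L j (g z) = 0 := fun j hj => by
      push Not; exact hB j hj
    refine hA k g ⟨hg, hgk, fun j hj z hz => ?_⟩
    by_cases hjl : j = l
    · subst hjl
      exfalso
      obtain ⟨m, hm1, hm2, hm⟩ := p2 (hB' j hj.symm) z hz
      exact hT (g z) (hg z).1 k j m hj.symm hm1.symm hm2.symm (hgk z) hz hm
        (p1 m hm1.symm hm2.symm (hB' m hm1.symm) z hm).2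
    · exact p1 j (Ne.symm hj) (Ne.symm hjl) (hB' j (Ne.symm hj)) z hz

lemma step {L : Fin 6 → (Fin 4 → ℂ) →ₗ[ℂ] ℂ} (hG : GP L) {s h : (Fin 4 → ℂ) → ℂ}
    (hs : Hom 6 s) (hh : Hom 6 h) (hT : Trip L s) {A : Finset (Sym2 (Fin 6))} (hA : Hyp L s A)
    {k l : Fin 6} (hkl : k ≠ l) (h1 : ∀ v, h v = 0 → ∃ m, m ≠ k ∧ m ≠ l ∧ L m v = 0)
    (h2 : ∀ v m, m ≠ k → m ≠ l → L m v = 0 → h v = 0) :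
    ∃ n : ℕ, Hyp L (fun v => s v + (n : ℂ) * h v) (insert s(k, l) A) := by
  by_contra hcon
  unfold Hyp at hcon
  push Not at hcon
  choose κ f hadm hnc using hcon
  obtain ⟨a, b, g, hg, hgnc, hc⟩ := brody f (fun n => (hadm n).1) hnc
  have hU : ((hyperfilter ℕ : Ultrafilter ℕ) : Filter ℕ) ≤ atTop := Nat.hyperfilter_le_atTop
  obtain ⟨k', hk'⟩ := ultra_pigeon (hyperfilter ℕ) (fun n k => κ n = k)
    (Eventually.of_forall fun n => ⟨_, rfl⟩)
  have hF : ∀ n, IsCurve (fun z => f n (a n + b n * z)) := fun n => (hadm n).1.comp_affine _ _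
  have hadm' : ∀ᶠ n : ℕ in (hyperfilter ℕ : Filter ℕ), Adm L (fun v => s v + (n : ℂ) * h v)
      (insert s(k, l) A) k' (fun z => f n (a n + b n * z)) := by
    filter_upwards [hk'] with n hn
    have := hadm n
    rw [hn] at this
    exact ⟨hF n, fun z => this.2.1 _, fun j hj z hz => this.2.2 j hj _ hz⟩
  apply hgnc
  by_cases e1 : k' = k
  · subst e1
    exact step_aux hG hs hh hT hA hkl h1 h2 (hyperfilter ℕ) hU hF hg hc hadm'
  by_cases e2 : k' = l
  · subst e2
    rw [Sym2.eq_swap] at hadm'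
    exact step_aux hG hs hh hT hA hkl.symm
      (fun v hv => by obtain ⟨m, q1, q2, q3⟩ := h1 v hv; exact ⟨m, q2, q1, q3⟩)
      (fun v m q1 q2 => h2 v m q2 q1) (hyperfilter ℕ) hU hF hg hc hadm'
  exfalso
  obtain ⟨n, hn⟩ := hk'.exists
  have h3 := hadm n
  rw [hn] at h3
  refine hnc n (hA k' (f n) ⟨h3.1, h3.2.1, fun j hj z hz => ?_⟩)
  obtain ⟨q1, q2⟩ := h3.2.2 j hj z hz
  simp only at q2
  rw [h2 _ k' e1 e2 (h3.2.1 z), mul_zero, add_zero] at q2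
  refine ⟨(Finset.mem_insert.1 q1).resolve_left ?_, q2⟩
  intro h
  rw [Sym2.eq_iff] at h
  rcases h with h | h
  · exact e1 h.1
  · exact e2 h.1

lemma final {L : Fin 6 → (Fin 4 → ℂ) →ₗ[ℂ] ℂ} (hG : GP L) {s : (Fin 4 → ℂ) → ℂ}
    (hs : Hom 6 s) (hT : Trip L s) (hA : Hyp L s Finset.univ)
    (ε : ℕ → ℂ) (hε0 : ∀ n, ε n ≠ 0) (hε : Tendsto ε atTop (𝓝 0))
    (f : ℕ → ℂ → Fin 4 → ℂ) (hf : ∀ n, IsCurve (f n)) (hnc : ∀ n, ¬ IsConst (f n))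
    (he : ∀ n z, ∏ i, L i (f n z) = ε n * s (f n z)) : False := by
  obtain ⟨a, b, g, hg, hgnc, hc⟩ := brody f hf hnc
  have hU : ((hyperfilter ℕ : Ultrafilter ℕ) : Filter ℕ) ≤ atTop := Nat.hyperfilter_le_atTop
  have hF : ∀ n, IsCurve (fun z => f n (a n + b n * z)) := fun n => (hf n).comp_affine _ _
  have hprod : ∀ z, ∏ i, L i (g z) = 0 := by
    intro z
    refine limit_eq (hom_prod L) hs (hyperfilter ℕ) hg hc z ε (hε.mono_left hU) (fun δ hδ => ?_)
    exact Eventually.of_forall fun n => ⟨z, mem_ball_self hδ, he n _⟩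
  have p1 : ∀ j, ¬ (∀ z, L j (g z) = 0) → ∀ z, L j (g z) = 0 → s (g z) = 0 := by
    intro j hne z hz
    refine zero_limit (hom_lin (L j)) hs hs (hyperfilter ℕ) hF hg hc hne z hz (fun _ => 0)
      tendsto_const_nhds (Eventually.of_forall fun n w hw => ?_)
    have := he n (a n + b n * w)
    rw [Finset.prod_eq_zero (Finset.mem_univ j) hw] at this
    rw [(mul_eq_zero.1 this.symm).resolve_left (hε0 n), mul_zero]
  obtain ⟨k, hk⟩ : ∃ k, ∀ z, L k (g z) = 0 := by
    by_contra hcon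
    push Not at hcon
    have : ∀ k, ∀ᶠ w in 𝓝[≠] (0 : ℂ), L k (g w) ≠ 0 := by
      intro k
      refine ((dichotomy (hom_lin (L k)) hg).resolve_left ?_) 0
      push Not
      exact hcon k
    obtain ⟨w, hw⟩ := (eventually_all.2 this).exists
    exact Finset.prod_ne_zero_iff.2 (fun i _ => hw i) (hprod w)
  apply hgnc
  by_cases hB : ∃ j, k ≠ j ∧ ∀ z, L j (g z) = 0
  · obtain ⟨j, hkj, hj⟩ := hB
    exact two_planes hG hT hg k hkj hk hj fun m _ _ hm3 z hz => p1 m hm3 z hz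
  · push Not at hB
    refine hA k g ⟨hg, hk, fun j hj z hz => ⟨Finset.mem_univ _, p1 j ?_ z hz⟩⟩
    push Not
    exact hB j hj.symm

lemma hom_eval {d : ℕ} {P : MvPolynomial (Fin 4) ℂ} (hP : P.IsHomogeneous d) :
    Hom d (fun v => eval v P) := by
  refine ⟨fun c v => ?_, ?_⟩
  · simp only [eval_eq]
    rw [Finset.mul_sum]
    refine Finset.sum_congr rfl fun m hm => ?_
    have hd := hP.degree_eq_sum_deg_support hm
    simp only [Pi.smul_apply, smul_eq_mul, mul_pow, Finset.prod_mul_distrib, Finset.prod_pow_eq_pow_sum]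
    have : ∑ i ∈ m.support, m i = d := by
      rw [hd]
    rw [this]; ring
  · intro v
    exact (AnalyticOnNhd.eval_mvPolynomial P v (Set.mem_univ v)).differentiableAt

lemma lin_eval {P : MvPolynomial (Fin 4) ℂ} (hP : P.IsHomogeneous 1) :
    ∃ L : (Fin 4 → ℂ) →ₗ[ℂ] ℂ, ∀ v, eval v P = L v := by
  have h : P ∈ homogeneousSubmodule (Fin 4) ℂ 1 := hP
  rw [homogeneousSubmodule_one_eq_span_X] at h
  induction h using Submodule.span_induction with
  | mem x hx =>
    obtain ⟨i, rfl⟩ := hx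
    exact ⟨LinearMap.proj i, fun v => by simp⟩
  | zero => exact ⟨0, fun v => by simp⟩
  | add x y _ _ hx hy =>
    have hx' := hx (by rw [← mem_homogeneousSubmodule, homogeneousSubmodule_one_eq_span_X]; assumption)
    have hy' := hy (by rw [← mem_homogeneousSubmodule, homogeneousSubmodule_one_eq_span_X]; assumption)
    obtain ⟨L, hL⟩ := hx'
    obtain ⟨M, hM⟩ := hy'
    exact ⟨L + M, fun v => by simp [hL, hM]⟩
  | smul a x _ hx =>
    have hx' := hx (by rw [← mem_homogeneousSubmodule, homogeneousSubmodule_one_eq_span_X]; assumption)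
    obtain ⟨L, hL⟩ := hx'
    exact ⟨a • L, fun v => by simp [hL]⟩

lemma ex_poly (p : Fin 6 → MvPolynomial (Fin 4) ℂ) (hp : ∀ i, (p i).IsHomogeneous 1)
    (L : Fin 6 → (Fin 4 → ℂ) →ₗ[ℂ] ℂ) (hL : ∀ i v, eval v (p i) = L i v) (hG : GP L)
    (A : Finset (Sym2 (Fin 6))) :
    ∃ s : MvPolynomial (Fin 4) ℂ, s.IsHomogeneous 6 ∧ Trip L (fun v => eval v s) ∧
      Hyp L (fun v => eval v s) A := by
  induction A using Finset.induction_on with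
  | empty =>
    refine ⟨∑ T ∈ Finset.powersetCard 3 Finset.univ, ∏ m ∈ T, p m ^ 2, ?_, ?_, ?_⟩
    · refine IsHomogeneous.sum _ _ _ fun T hT => ?_
      have := IsHomogeneous.prod T (fun m => p m ^ 2) (fun _ => 1 * 2) (fun i _ => (hp i).pow 2)
      rw [Finset.sum_const, (Finset.mem_powersetCard.1 hT).2] at this
      exact this
    · intro v hv i j k hij hik hjk hi hj hk
      have hcard : (Finset.univ \ {i, j, k} : Finset (Fin 6)).card = 3 := by
        rw [Finset.card_sdiff_of_subset (Finset.subset_univ _), Finset.card_eq_three.2 ⟨i, j, k, hij, hik, hjk, rfl⟩]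
        rfl
      simp only [map_sum, map_prod, map_pow, hL]
      rw [Finset.sum_eq_single (Finset.univ \ {i, j, k})]
      · refine Finset.prod_ne_zero_iff.2 fun m hm h => hv ?_
        simp only [Finset.mem_sdiff, Finset.mem_univ, true_and, Finset.mem_insert,
          Finset.mem_singleton, not_or] at hm
        exact hG i j k m hij hik (Ne.symm hm.1) hjk (Ne.symm hm.2.1) (Ne.symm hm.2.2) v hi hj hk
          (by simpa using h)
      · intro T hT hne
        have hT3 := (Finset.mem_powersetCard.1 hT).2
        have : ¬ T ⊆ Finset.univ \ {i, j, k} := fun h =>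
          hne (Finset.eq_of_subset_of_card_le h (by rw [hcard, hT3]))
        rw [Finset.not_subset] at this
        obtain ⟨m, hm, hm'⟩ := this
        refine Finset.prod_eq_zero hm ?_
        simp only [Finset.mem_sdiff, Finset.mem_univ, true_and, Finset.mem_insert,
          Finset.mem_singleton, not_not] at hm'
        rcases hm' with rfl | rfl | rfl <;> simp [*]
      · intro h
        exact absurd (Finset.mem_powersetCard.2 ⟨Finset.subset_univ _, hcard⟩) h
    · intro k f hf
      exact plane_const hG k hf.1 hf.2.1 fun j hj z hz => by simpa using (hf.2.2 j hj z hz).1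
  | insert D A _ ih =>
    obtain ⟨s, hs, hT, hA⟩ := ih
    induction D using Sym2.inductionOn with
    | _ k l =>
    by_cases hkl : k = l
    · subst hkl
      refine ⟨s, hs, hT, fun k' f hf => hA k' f ⟨hf.1, hf.2.1, fun j hj z hz => ?_⟩⟩
      obtain ⟨q1, q2⟩ := hf.2.2 j hj z hz
      refine ⟨(Finset.mem_insert.1 q1).resolve_left (fun h => ?_), q2⟩
      rw [Sym2.eq_iff] at h
      rcases h with h | h
      · exact hj (h.2.trans h.1.symm)
      · exact hj (h.2.trans h.1.symm)
    · obtain ⟨a, ha1, ha2, -⟩ := ex_fourth k l l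
      set h : MvPolynomial (Fin 4) ℂ := (∏ m ∈ Finset.univ \ {k, l}, p m) * p a ^ 2 with hh
      have hcard : (Finset.univ \ {k, l} : Finset (Fin 6)).card = 4 := by
        rw [Finset.card_sdiff_of_subset (Finset.subset_univ _), Finset.card_pair hkl]
        rfl
      have hhom : h.IsHomogeneous 6 := by
        have := IsHomogeneous.prod (Finset.univ \ {k, l}) p (fun _ => 1) (fun i _ => hp i)
        rw [Finset.sum_const, hcard] at this
        exact this.mul ((hp a).pow 2)
      have h1 : ∀ v, eval v h = 0 → ∃ m, m ≠ k ∧ m ≠ l ∧ L m v = 0 := by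
        intro v hv
        simp only [hh, map_mul, map_prod, map_pow, hL, mul_eq_zero, Finset.prod_eq_zero_iff,
          Finset.mem_sdiff, Finset.mem_univ, true_and, Finset.mem_insert, Finset.mem_singleton,
          not_or] at hv
        rcases hv with ⟨m, hm, h0⟩ | h0
        · exact ⟨m, hm.1, hm.2, h0⟩
        · exact ⟨a, ha1.symm, ha2.symm, by simpa using h0⟩
      have h2 : ∀ v m, m ≠ k → m ≠ l → L m v = 0 → eval v h = 0 := by
        intro v m hm1 hm2 hm
        rw [hh, map_mul, map_prod, Finset.prod_eq_zero (i := m), zero_mul]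
        · simp [hm1, hm2]
        · rw [hL, hm]
      obtain ⟨n, hn⟩ := step hG (hom_eval hs) (hom_eval hhom) hT hA hkl h1 h2
      have he : ∀ v, eval v (s + C (n : ℂ) * h) = eval v s + (n : ℂ) * eval v h := by
        intro v; simp
      refine ⟨s + C (n : ℂ) * h, hs.add (hhom.C_mul _), ?_, ?_⟩
      · intro v hv i j m hij him hjm hi hj hm
        have h0 : eval v h = 0 := by
          by_contra hne
          have q : ∀ x, L x v = 0 → x = k ∨ x = l := by
            intro x hx
            by_contra hcon
            rw [not_or] at hcon
            exact hne (h2 v x hcon.1 hcon.2 hx)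
          rcases q i hi with r1 | r1 <;> rcases q j hj with r2 | r2 <;> rcases q m hm with r3 | r3 <;>
            simp_all
        simp only [he, h0, mul_zero, add_zero]
        exact hT v hv i j m hij him hjm hi hj hm
      · simp only [he]
        exact hn

lemma curve_rep {f : ℂ → Projectivization ℂ (Fin 4 → ℂ)} (hf : HoloToProj f) :
    IsCurve (fun z => (f z).rep) := by
  intro z
  refine ⟨(f z).rep_nonzero, fun i hi => ?_⟩
  obtain ⟨W, hW, hz, F, hF, hmk⟩ := hf z
  have hrep : ∀ w ∈ W, ∃ c : ℂ, c ≠ 0 ∧ (f w).rep = c • F w := by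
    intro w hw
    obtain ⟨h, e⟩ := hmk w hw
    have e2 : Projectivization.mk ℂ (f w).rep (f w).rep_nonzero = Projectivization.mk ℂ (F w) h := by
      rw [Projectivization.mk_rep, e]
    obtain ⟨c, hc⟩ := (Projectivization.mk_eq_mk_iff' ℂ _ _ _ _).1 e2
    refine ⟨c, ?_, hc.symm⟩
    rintro rfl
    apply (f w).rep_nonzero
    rw [← hc, zero_smul]
  have hFa : AnalyticAt ℂ F z := hF.analyticAt (hW.mem_nhds hz)
  have hFi : F z i ≠ 0 := by
    obtain ⟨c, hc, e⟩ := hrep z hz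
    intro h
    apply hi
    simp [e, h]
  have hFa' : AnalyticAt ℂ (fun w => (F w i)⁻¹ • F w) z :=
    ((analyticAt_coord hFa i).inv hFi).smul hFa
  refine hFa'.congr ?_
  filter_upwards [hW.mem_nhds hz] with w hw
  obtain ⟨c, hc, e⟩ := hrep w hw
  simp only [nrm, e, Pi.smul_apply, smul_eq_mul, smul_smul]
  congr 1
  field_simp

lemma const_rep {f : ℂ → Projectivization ℂ (Fin 4 → ℂ)} (hc : IsConst (fun z => (f z).rep))
    (z w : ℂ) : f z = f w := by
  rw [← (f z).mk_rep, ← (f w).mk_rep]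
  obtain ⟨i, hi⟩ := exists_coord (f w).rep_nonzero
  refine (Projectivization.mk_eq_mk_iff' ℂ _ _ _ _).2 ⟨(f z).rep i / (f w).rep i, ?_⟩
  ext j
  have := hc z w i j
  simp only at this
  simp only [Pi.smul_apply, smul_eq_mul]
  field_simp
  linear_combination this

/-- **A hyperbolic sextic.**  Given six planes `(p i = 0)` in general position in `P³(ℂ)`,
there is a sextic `S = (s = 0)`, in general position with respect to the planes, such
that the sextic surface `Σ_ε = (p 0 ⋯ p 5 = ε s)` is hyperbolic for all sufficiently
small `ε ≠ 0`. -/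
theorem hyperbolic_sextic
    (p : Fin 6 → MvPolynomial (Fin 4) ℂ)
    (hp_lin : ∀ i, (p i).IsHomogeneous 1)
    (hp0 : ∀ i, p i ≠ 0)
    -- the six planes are distinct
    (hp_distinct : ∀ i j, i ≠ j → ¬ ∃ c : ℂ, p i = c • p j)
    -- general position: no quadruple point
    (hgen : ∀ i j k l : Fin 6, i ≠ j → i ≠ k → i ≠ l → j ≠ k → j ≠ l → k ≠ l →
      ∀ v : Fin 4 → ℂ, v ≠ 0 →
        ¬ (eval v (p i) = 0 ∧ eval v (p j) = 0 ∧ eval v (p k) = 0 ∧ eval v (p l) = 0)) :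
    ∃ s : MvPolynomial (Fin 4) ℂ, s.IsHomogeneous 6 ∧ s ≠ 0 ∧
      -- `S` is in general position with respect to the planes: it avoids the triple points
      (∀ v : Fin 4 → ℂ, v ≠ 0 →
        (∃ i j k : Fin 6, i ≠ j ∧ i ≠ k ∧ j ≠ k ∧
          eval v (p i) = 0 ∧ eval v (p j) = 0 ∧ eval v (p k) = 0) →
        eval v s ≠ 0) ∧
      -- for all sufficiently small `ε ≠ 0`, the surface `Σ_ε` is hyperbolic
      ∃ ε₀ : ℝ, 0 < ε₀ ∧ ∀ ε : ℂ, ε ≠ 0 → ‖ε‖ < ε₀ →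
        ∀ f : ℂ → Projectivization ℂ (Fin 4 → ℂ), HoloToProj f →
          (∀ z : ℂ, eval (f z).rep (∏ i, p i) = ε * eval (f z).rep s) →
          ∀ z w : ℂ, f z = f w := by
  choose L hL using fun i => lin_eval (hp_lin i)
  have hG : GP L := by
    intro i j k l h1 h2 h3 h4 h5 h6 v a b c d
    by_contra hv
    exact hgen i j k l h1 h2 h3 h4 h5 h6 v hv ⟨by rw [hL, a], by rw [hL, b], by rw [hL, c], by rw [hL, d]⟩
  obtain ⟨s, hs, hT, hA⟩ := ex_poly p hp_lin L hL hG Finset.univ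
  refine ⟨s, hs, ?_, ?_, ?_⟩
  · rintro rfl
    obtain ⟨v, v0, v1, v2, v3⟩ := dual hG (k := 0) (a := 1) (b := 2) (c := 3) (by decide) (by decide)
      (by decide) (by decide) (by decide) (by decide) 0 0 0 1
    refine hT v ?_ 0 1 2 (by decide) (by decide) (by decide) v0 v1 v2 (by simp)
    rintro rfl
    simp at v3
  · rintro v hv ⟨i, j, k, hij, hik, hjk, hi, hj, hk⟩
    rw [hL] at hi hj hk
    exact hT v hv i j k hij hik hjk hi hj hk
  · by_contra hcon
    push Not at hcon
    choose ε hε0 hεn f hf he z w hzw using fun n : ℕ => hcon (1 / ((n : ℝ) + 1)) (by positivity)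
    refine final hG (hom_eval hs) hT hA ε hε0 ?_ (fun n z => (f n z).rep) (fun n => curve_rep (hf n))
      (fun n h => hzw n (const_rep h _ _)) ?_
    · exact squeeze_zero_norm (fun n => (hεn n).le) tendsto_one_div_add_atTop_nhds_zero_nat
    · intro n z
      have := he n z
      simp only [map_prod, hL] at this
      exact this
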